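/- arXiv:1406.5908 — 3 statements merged into one kernel-verified Lean document; each statement's English description precedes it below -/
import Mathlib

section
/- Let d ∈ ℕ and let (G_i)_{i∈ℕ} be a sequence of finite groups, each with a distinguished generating set of cardinality d. Then there exist, for every subset S ⊆ ℕ, a finitely generated group W_S of subexponential growth together with, for every s ∈ S, an injective homomorphism Ψ_s: G_s → W_S, and constants K_s, L_s ≥ 1 which depend only on s and on the groups G_j with j ∈ S, j < s (in particular not on G_s, nor on G_j for j > s), such that d_{G_s}(x,y)/K_s ≤ d_{W_S}(Ψ_s(x), Ψ_s(y)) ≤ L_s · d_{G_s}(x,y) for all x,y ∈ G_s, where d_{G_s} is the word metric on G_s and d_{W_S} is the word metric on W_S with respect to a fixed finite generating set. -/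
/-- The set of elements of `G` expressible as a product of at most `n`
elements of `S ∪ S⁻¹`. -/
def wordBall {G : Type*} [Group G] (S : Set G) (n : ℕ) : Set G :=
  {g | ∃ l : List G, (∀ x ∈ l, x ∈ S ∨ x⁻¹ ∈ S) ∧ l.length ≤ n ∧ l.prod = g}

/-- The word norm of `g` with respect to `S`. -/
noncomputable def wordNorm {G : Type*} [Group G] (S : Set G) (g : G) : ℕ :=
  sInf {n | ∃ l : List G, (∀ x ∈ l, x ∈ S ∨ x⁻¹ ∈ S) ∧ l.length = n ∧ l.prod = g}

/-- The word metric `d_S(x, y) = ‖x y⁻¹‖_S`. -/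
noncomputable def wordDist {G : Type*} [Group G] (S : Set G) (x y : G) : ℕ :=
  wordNorm S (x * y⁻¹)

/-- `(G, S)` has subexponential growth. -/
def SubexpGrowth {G : Type*} [Group G] (S : Set G) : Prop :=
  ∀ lam : ℝ, 1 < lam → ∀ᶠ n : ℕ in Filter.atTop,
    (Nat.card (wordBall S n) : ℝ) < lam ^ n

/-- A finite group marked with a distinguished generating set of cardinality
`d`. -/
structure MarkedGroup (d : ℕ) : Type 1 where
  carrier : Type
  [grp : Group carrier]
  [fin : Fintype carrier]
  gens : Finset carrier
  card_gens : gens.card = d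
  isGen : Subgroup.closure (gens : Set carrier) = ⊤

attribute [instance] MarkedGroup.grp MarkedGroup.fin


namespace ISG
set_option linter.unusedSectionVars false
set_option linter.unusedSimpArgs false
open scoped commutatorElement

/-- Klein four-group. -/
abbrev V := Multiplicative (ZMod 2 × ZMod 2)

/-- order-three automorphism `b → c → d → b`. -/
def rot (x : V) : V :=
  Multiplicative.ofAdd ((Multiplicative.toAdd x).2,
    (Multiplicative.toAdd x).1 + (Multiplicative.toAdd x).2)

/-- the inverse of `rot` -/
def rotInv (x : V) : V := rot (rot x)

/-- `om x` says whether the section of `x` at `0` is `a`. -/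
def om (x : V) : Bool := decide ((Multiplicative.toAdd x).1 + (Multiplicative.toAdd x).2 = 1)

/-- the letter `b` -/
def vb : V := Multiplicative.ofAdd (1, 0)

lemma rot_mul : ∀ x y : V, rot (x * y) = rot x * rot y := by decide
lemma rot_one : rot 1 = 1 := by decide
lemma rot_eq_one : ∀ x : V, rot x = 1 ↔ x = 1 := by decide
lemma rot_rotInv : ∀ x : V, rot (rotInv x) = x := by decide
lemma om_mul : ∀ x y : V, om (x * y) = xor (om x) (om y) := by decide
lemma om_one : om 1 = false := by decide
lemma om_vb : om vb = true := by decide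

/-- weights on the Klein group (for nontrivial letters) -/
def wV (x : V) : ℕ :=
  if x = 1 then 5 else if x = Multiplicative.ofAdd (1, 0) then 5
  else if x = Multiplicative.ofAdd (0, 1) then 4 else 3

lemma wV_le : ∀ x : V, wV x ≤ 5 := by decide
lemma le_wV : ∀ x : V, 3 ≤ wV x := by decide
lemma wV_contr : ∀ x : V, 10 * (wV (rot x) + if om x then 5 else 0) ≤ 9 * (5 + wV x) := by decide

/-- flip the first bit -/
def flipHd : List Bool → List Bool
  | [] => []
  | b :: v => (!b) :: v

lemma flipHd_flipHd (v : List Bool) : flipHd (flipHd v) = v := by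
  cases v <;> simp [flipHd]

lemma flipHd_eq_nil (v : List Bool) : flipHd v = [] ↔ v = [] := by
  cases v <;> simp [flipHd]

/-- tree action of the Klein group -/
def tb : V → List Bool → List Bool
  | _, [] => []
  | x, true :: v => true :: tb (rot x) v
  | x, false :: v => false :: (if om x then flipHd v else v)

lemma tb_eq_nil (x : V) (v : List Bool) : tb x v = [] ↔ v = [] := by
  rcases v with _ | ⟨_ | _, v⟩ <;> simp [tb]

lemma tb_one (v : List Bool) : tb 1 v = v := by
  induction v with
  | nil => rfl
  | cons b v ih => cases b <;> simp [tb, om_one, rot_one, ih]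

lemma tb_mul (x y : V) (v : List Bool) : tb (x * y) v = tb x (tb y v) := by
  induction v generalizing x y with
  | nil => rfl
  | cons b v ih =>
    cases b
    · simp only [tb, om_mul]
      cases om x <;> cases om y <;> simp [flipHd_flipHd]
    · simp [tb, rot_mul, ih]

section
variable {P Q H : Type} [Group P] [Group Q] [Group H]

/-- decoration of a directed letter -/
def dec : (ℕ → P →* H) → (ℕ → Q →* H) → P → Q → List Bool → H
  | _, _, _, _, [] => 1
  | φ, ψ, p, q, x :: v =>
    if v = [] then (if x then ψ 0 q else φ 0 p)
    else if x then dec (fun n => φ (n + 1)) (fun n => ψ (n + 1)) p q v else 1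

lemma dec_one (φ : ℕ → P →* H) (ψ : ℕ → Q →* H) (v : List Bool) : dec φ ψ 1 1 v = 1 := by
  induction v generalizing φ ψ with
  | nil => rfl
  | cons b v ih => cases b <;> simp [dec, ih]

lemma dec_mul (φ : ℕ → P →* H) (ψ : ℕ → Q →* H) (p p' : P) (q q' : Q) (x : V) (v : List Bool) :
    dec φ ψ (p * p') (q * q') v = dec φ ψ p q (tb x v) * dec φ ψ p' q' v := by
  induction v generalizing φ ψ x with
  | nil => simp [dec, tb]
  | cons b v ih =>
    cases b
    · by_cases hv : v = []
      · subst hv; simp [dec, tb, flipHd]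
      · simp only [dec, tb, hv, if_false]
        cases om x <;> simp [flipHd_eq_nil, hv]
    · by_cases hv : v = []
      · subst hv; simp [dec, tb]
      · simp [dec, tb, hv, tb_eq_nil, ih _ _ (rot x)]

/-- the directed group -/
abbrev B (P Q : Type) := V × P × Q

/-- function given by a directed letter -/
def fB (φ : ℕ → P →* H) (ψ : ℕ → Q →* H) (β : B P Q) (z : List Bool × H) : List Bool × H :=
  (tb β.1 z.1, dec φ ψ β.2.1 β.2.2 z.1 * z.2)

lemma fB_one (φ : ℕ → P →* H) (ψ : ℕ → Q →* H) (z : List Bool × H) : fB φ ψ 1 z = z := by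
  simp [fB, tb_one, dec_one]

lemma fB_mul (φ : ℕ → P →* H) (ψ : ℕ → Q →* H) (β β' : B P Q) (z : List Bool × H) :
    fB φ ψ (β * β') z = fB φ ψ β (fB φ ψ β' z) := by
  simp [fB, tb_mul, dec_mul φ ψ _ _ _ _ β'.1 z.1, mul_assoc]

/-- directed letters as permutations -/
def pB (φ : ℕ → P →* H) (ψ : ℕ → Q →* H) : B P Q →* Equiv.Perm (List Bool × H) where
  toFun β :=
    { toFun := fB φ ψ β
      invFun := fB φ ψ β⁻¹
      left_inv := fun z => by rw [← fB_mul]; simp [fB_one]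
      right_inv := fun z => by rw [← fB_mul]; simp [fB_one] }
  map_one' := by ext1 z; exact fB_one φ ψ z
  map_mul' β β' := by ext1 z; exact fB_mul φ ψ β β' z

/-- the rooted letter -/
def pa (H : Type) : Equiv.Perm (List Bool × H) where
  toFun z := (flipHd z.1, z.2)
  invFun z := (flipHd z.1, z.2)
  left_inv z := by simp [flipHd_flipHd]
  right_inv z := by simp [flipHd_flipHd]

lemma pa_mul_pa : pa H * pa H = 1 := by
  ext1 z; simp [pa, flipHd_flipHd]

/-- letters as permutations -/
def pl (φ : ℕ → P →* H) (ψ : ℕ → Q →* H) : Option (B P Q) → Equiv.Perm (List Bool × H)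
  | none => pa H
  | some β => pB φ ψ β

/-- evaluation of words -/
def ev (φ : ℕ → P →* H) (ψ : ℕ → Q →* H) (l : List (Option (B P Q))) :
    Equiv.Perm (List Bool × H) := (l.map (pl φ ψ)).prod

lemma ev_nil (φ : ℕ → P →* H) (ψ : ℕ → Q →* H) : ev φ ψ [] = 1 := rfl
lemma ev_cons (φ : ℕ → P →* H) (ψ : ℕ → Q →* H) (c) (l : List (Option (B P Q))) :
    ev φ ψ (c :: l) = pl φ ψ c * ev φ ψ l := by simp [ev]
lemma ev_append (φ : ℕ → P →* H) (ψ : ℕ → Q →* H) (l l' : List (Option (B P Q))) :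
    ev φ ψ (l ++ l') = ev φ ψ l * ev φ ψ l' := by simp [ev]

open Classical in
/-- weight of a letter -/
noncomputable def wl : Option (B P Q) → ℕ
  | none => 5
  | some β => if β = 1 then 0 else wV β.1

/-- weight of a word -/
noncomputable def wt (l : List (Option (B P Q))) : ℕ := (l.map wl).sum

lemma wt_nil : wt ([] : List (Option (B P Q))) = 0 := rfl
lemma wt_cons (c) (l : List (Option (B P Q))) : wt (c :: l) = wl c + wt l := by simp [wt]
lemma wt_append (l l' : List (Option (B P Q))) : wt (l ++ l') = wt l + wt l' := by simp [wt]

lemma wl_le (c : Option (B P Q)) : wl c ≤ 5 := by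
  rcases c with _ | β
  · simp [wl]
  · simp only [wl]; split_ifs
    · omega
    · exact wV_le _

lemma wl_mul (β β' : B P Q) : wl (some (β * β')) ≤ wl (some β) + wl (some β') := by
  by_cases h : β = 1
  · subst h; simp
  by_cases h' : β' = 1
  · subst h'; simp
  have h1 := wl_le (some (β * β'))
  have h2 := le_wV β.1
  have h3 := le_wV β'.1
  simp only [wl, h, h', if_false] at *
  omega

/-- canonical words `β₀ a β₁ a β₂ ⋯` -/
def cw (L : List (B P Q)) : List (Option (B P Q)) := L.flatMap fun β => [none, some β]

lemma exists_canon (φ : ℕ → P →* H) (ψ : ℕ → Q →* H) (l : List (Option (B P Q))) :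
    ∃ (β : B P Q) (L : List (B P Q)), ev φ ψ (some β :: cw L) = ev φ ψ l ∧
      wt (some β :: cw L) ≤ wt l := by
  induction l with
  | nil => exact ⟨1, [], by simp [ev, cw, pl], by simp [wt, cw, wl]⟩
  | cons c l ih =>
    obtain ⟨β, L, h1, h2⟩ := ih
    rcases c with _ | γ
    · refine ⟨1, β :: L, ?_, ?_⟩
      · rw [ev_cons _ _ none l, ← h1]
        simp [cw, ev_cons, pl]
      · rw [wt_cons none l]
        have : wt (some 1 :: cw (β :: L)) = 5 + wt (some β :: cw L) := by
          simp [cw, wt_cons, wl]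
        simp only [wl] at *
        omega
    · refine ⟨γ * β, L, ?_, ?_⟩
      · rw [ev_cons _ _ (some γ) l, ← h1]
        simp [ev_cons, pl, mul_assoc]
      · rw [wt_cons (some γ) l]
        rw [wt_cons] at h2 ⊢
        have := wl_mul γ β
        omega

/-- bit after applying a letter -/
def ob : Option (B P Q) → Bool → Bool
  | none, x => !x
  | some _, x => x

/-- section of a letter -/
def sl : Option (B P Q) → Bool → List (Option (B P Q))
  | none, _ => []
  | some β, true => [some (rot β.1, β.2)]
  | some β, false => if om β.1 then [none] else []

/-- first-level decoration of a letter -/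
def hl (φ : ℕ → P →* H) (ψ : ℕ → Q →* H) : Option (B P Q) → Bool → H
  | none, _ => 1
  | some β, true => ψ 0 β.2.2
  | some β, false => φ 0 β.2.1

/-- output bit of a word -/
def obw : List (Option (B P Q)) → Bool → Bool
  | [], x => x
  | c :: l, x => ob c (obw l x)

/-- section of a word -/
def sw : List (Option (B P Q)) → Bool → List (Option (B P Q))
  | [], _ => []
  | c :: l, x => sl c (obw l x) ++ sw l x

/-- first level decoration of a word -/
def hw (φ : ℕ → P →* H) (ψ : ℕ → Q →* H) : List (Option (B P Q)) → Bool → H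
  | [], _ => 1
  | c :: l, x => hl φ ψ c (obw l x) * hw φ ψ l x

/-- shift of the data -/
def sh {R : Type} [Group R] (φ : ℕ → R →* H) : ℕ → R →* H := fun n => φ (n + 1)

lemma pl_nil (φ : ℕ → P →* H) (ψ : ℕ → Q →* H) (c : Option (B P Q)) (h : H) :
    pl φ ψ c ([], h) = ([], h) := by
  rcases c with _ | β
  · simp [pl, pa, flipHd]
  · simp [pl, pB, fB, tb, dec]

lemma ev_nil_list (φ : ℕ → P →* H) (ψ : ℕ → Q →* H) (l : List (Option (B P Q))) (h : H) :
    ev φ ψ l ([], h) = ([], h) := by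
  induction l with
  | nil => simp [ev_nil]
  | cons c l ih => simp [ev_cons, ih, pl_nil]

lemma pl_fst_eq_nil (φ : ℕ → P →* H) (ψ : ℕ → Q →* H) (c : Option (B P Q)) (z : List Bool × H) :
    (pl φ ψ c z).1 = [] ↔ z.1 = [] := by
  rcases c with _ | β
  · simp [pl, pa, flipHd_eq_nil]
  · simp [pl, pB, fB, tb_eq_nil]

lemma ev_fst_eq_nil (φ : ℕ → P →* H) (ψ : ℕ → Q →* H) (l : List (Option (B P Q)))
    (z : List Bool × H) : (ev φ ψ l z).1 = [] ↔ z.1 = [] := by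
  induction l with
  | nil => simp [ev_nil]
  | cons c l ih => simp [ev_cons, ih, pl_fst_eq_nil]

lemma pl_single (φ : ℕ → P →* H) (ψ : ℕ → Q →* H) (c : Option (B P Q)) (x : Bool) (h : H) :
    pl φ ψ c ([x], h) = ([ob c x], hl φ ψ c x * h) := by
  rcases c with _ | β
  · simp [pl, pa, flipHd, ob, hl]
  · cases x <;> simp [pl, pB, fB, tb, dec, ob, hl, flipHd]

lemma pl_cons (φ : ℕ → P →* H) (ψ : ℕ → Q →* H) (c : Option (B P Q)) (x : Bool) (v : List Bool)
    (hv : v ≠ []) (h : H) :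
    pl φ ψ c (x :: v, h) = (ob c x :: (ev (sh φ) (sh ψ) (sl c x) (v, h)).1,
      (ev (sh φ) (sh ψ) (sl c x) (v, h)).2) := by
  rcases c with _ | β
  · simp [pl, pa, flipHd, ob, sl, ev_nil]
  · cases x
    · rcases ho : om β.1 with _ | _ <;> simp [pl, pB, fB, tb, dec, ob, sl, ho, hv, ev, pa]
    · simp [pl, pB, fB, tb, dec, ob, sl, hv, ev]
      rfl

lemma ev_single (φ : ℕ → P →* H) (ψ : ℕ → Q →* H) (l : List (Option (B P Q))) (x : Bool) (h : H) :
    ev φ ψ l ([x], h) = ([obw l x], hw φ ψ l x * h) := by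
  induction l with
  | nil => simp [ev_nil, obw, hw]
  | cons c l ih => simp [ev_cons, ih, pl_single, obw, hw, mul_assoc]

lemma ev_cons_list (φ : ℕ → P →* H) (ψ : ℕ → Q →* H) (l : List (Option (B P Q))) (x : Bool)
    (v : List Bool) (hv : v ≠ []) (h : H) :
    ev φ ψ l (x :: v, h) = (obw l x :: (ev (sh φ) (sh ψ) (sw l x) (v, h)).1,
      (ev (sh φ) (sh ψ) (sw l x) (v, h)).2) := by
  induction l with
  | nil => simp [ev_nil, obw, sw]
  | cons c l ih =>
    rw [ev_cons, Equiv.Perm.mul_apply, ih, pl_cons]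
    · simp [obw, sw, ev_append]
    · rw [Ne, ev_fst_eq_nil]; exact hv

lemma obw_not (l : List (Option (B P Q))) (x : Bool) : obw l (!x) = !(obw l x) := by
  induction l with
  | nil => rfl
  | cons c l ih => rcases c with _ | β <;> simp [obw, ob, ih]

lemma wt_sw_cons (c) (l : List (Option (B P Q))) :
    wt (sw (c :: l) false) + wt (sw (c :: l) true) =
      (wt (sl c false) + wt (sl c true)) + (wt (sw l false) + wt (sw l true)) := by
  have h := obw_not l false
  simp only [sw, wt_append]
  simp only [Bool.not_false] at h
  rw [h]
  cases obw l false <;> simp <;> omega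

lemma wt_sl_some (β : B P Q) :
    10 * (wt (sl (some β) false) + wt (sl (some β) true)) ≤ 9 * (5 + wl (some β)) := by
  by_cases h : β = 1
  · subst h
    have : ((rot 1, 1) : B P Q) = 1 := by rw [rot_one]; rfl
    simp [sl, om_one, wt, wl, this]
  · have h2 := wV_contr β.1
    have h3 : ((rot β.1, β.2) : B P Q) ≠ 1 := by
      intro h4
      apply h
      rw [Prod.ext_iff] at h4 ⊢
      exact ⟨(rot_eq_one _).1 h4.1, h4.2⟩
    simp only [sl, wt, wl, h, List.map_cons, List.map_nil, List.sum_cons, List.sum_nil, if_false, h3]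
    split_ifs at h2 ⊢ <;> simp [wl] <;> omega

lemma wt_sw_cw (L : List (B P Q)) :
    10 * (wt (sw (cw L) false) + wt (sw (cw L) true)) ≤ 9 * wt (cw L) := by
  induction L with
  | nil => simp [cw, sw, wt]
  | cons β L ih =>
    have : cw (β :: L) = none :: some β :: cw L := by simp [cw]
    rw [this, wt_sw_cons, wt_sw_cons, wt_cons, wt_cons]
    have := wt_sl_some β
    have h2 : wt (sl (none : Option (B P Q)) false) + wt (sl (none : Option (B P Q)) true) = 0 := by
      simp [sl, wt]
    have h3 : wl (none : Option (B P Q)) = 5 := rfl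
    omega

lemma wt_sw_canon (β : B P Q) (L : List (B P Q)) :
    10 * (wt (sw (some β :: cw L) false) + wt (sw (some β :: cw L) true)) ≤
      9 * wt (some β :: cw L) + 45 := by
  rw [wt_sw_cons, wt_cons]
  have := wt_sl_some β
  have := wt_sw_cw L
  omega

end
end ISG
namespace ISG
set_option linter.unusedSectionVars false
set_option linter.unusedSimpArgs false
open scoped commutatorElement
section
variable {P Q H : Type} [Group P] [Group Q] [Group H]

/-- elements of weight at most `n` -/
def SS (φ : ℕ → P →* H) (ψ : ℕ → Q →* H) (n : ℕ) : Set (Equiv.Perm (List Bool × H)) :=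
  {f | ∃ l, ev φ ψ l = f ∧ wt l ≤ n}

/-- finiteness hypothesis on the decorations -/
def FinD (φ : ℕ → P →* H) (ψ : ℕ → Q →* H) : Prop :=
  ∀ s, ∃ K : Subgroup H, Finite K ∧ (∀ p, φ s p ∈ K) ∧ (∀ q, ψ s q ∈ K)

lemma FinD.sh {φ : ℕ → P →* H} {ψ : ℕ → Q →* H} (h : FinD φ ψ) : FinD (sh φ) (sh ψ) :=
  fun s => h (s + 1)

lemma exists_short (φ : ℕ → P →* H) (ψ : ℕ → Q →* H) (l : List (Option (B P Q))) :
    ∃ l' : List (Option (B P Q)), ev φ ψ l' = ev φ ψ l ∧ l'.length ≤ wt l := by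
  induction l with
  | nil => exact ⟨[], rfl, by simp⟩
  | cons c l ih =>
    obtain ⟨l', h1, h2⟩ := ih
    by_cases hc : c = some 1
    · exact ⟨l', by simp [hc, ev_cons, pl, h1], by rw [wt_cons]; omega⟩
    · refine ⟨c :: l', by simp [ev_cons, h1], ?_⟩
      have : 1 ≤ wl c := by
        rcases c with _ | β
        · simp [wl]
        · have := le_wV β.1
          simp only [Option.some.injEq] at hc
          simp only [wl, hc, if_false]; omega
      rw [wt_cons, List.length_cons]; omega

lemma SS_sub (φ : ℕ → P →* H) (ψ : ℕ → Q →* H) (n : ℕ) :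
    SS φ ψ n ⊆ Set.range fun f : Fin n → Option (B P Q) => ev φ ψ (List.ofFn f) := by
  rintro _ ⟨l, rfl, hl⟩
  obtain ⟨l', h1, h2⟩ := exists_short φ ψ l
  have h3 : (l' ++ List.replicate (n - l'.length) (some 1)).length = n := by simp; omega
  have h4 : ev φ ψ (l' ++ List.replicate (n - l'.length) (some 1)) = ev φ ψ l := by
    rw [ev_append, h1]; simp [ev, pl]
  generalize (l' ++ List.replicate (n - l'.length) (some 1)) = m at *
  subst h3
  exact ⟨m.get, by simp [List.ofFn_get, h4]⟩

lemma SS_finite [Finite P] [Finite Q] (φ : ℕ → P →* H) (ψ : ℕ → Q →* H) (n : ℕ) :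
    (SS φ ψ n).Finite := (Set.finite_range _).subset (SS_sub φ ψ n)

lemma SS_card [Finite P] [Finite Q] (φ : ℕ → P →* H) (ψ : ℕ → Q →* H) (n : ℕ) :
    (SS φ ψ n).ncard ≤ (Nat.card (Option (B P Q))) ^ n := by
  refine (Set.ncard_le_ncard (SS_sub φ ψ n) (Set.finite_range _)).trans ?_
  rw [← Set.image_univ]
  refine (Set.ncard_image_le Set.finite_univ).trans ?_
  rw [Set.ncard_univ, Nat.card_fun]; simp

/-- reassemble a function from its first level data -/
def asm (t : (Bool × Bool) × (H × H) × (Equiv.Perm (List Bool × H) × Equiv.Perm (List Bool × H))) :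
    List Bool × H → List Bool × H
  | ([], h) => ([], h)
  | ([false], h) => ([t.1.1], t.2.1.1 * h)
  | ([true], h) => ([t.1.2], t.2.1.2 * h)
  | (false :: x :: v, h) => (t.1.1 :: (t.2.2.1 (x :: v, h)).1, (t.2.2.1 (x :: v, h)).2)
  | (true :: x :: v, h) => (t.1.2 :: (t.2.2.2 (x :: v, h)).1, (t.2.2.2 (x :: v, h)).2)

lemma asm_ev (φ : ℕ → P →* H) (ψ : ℕ → Q →* H) (l : List (Option (B P Q))) :
    asm ((obw l false, obw l true), (hw φ ψ l false, hw φ ψ l true),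
      (ev (sh φ) (sh ψ) (sw l false), ev (sh φ) (sh ψ) (sw l true))) = ⇑(ev φ ψ l) := by
  funext z
  obtain ⟨v, h⟩ := z
  rcases v with _ | ⟨_ | _, _ | ⟨y, v⟩⟩
  · simp [asm, ev_nil_list]
  · simp [asm, ev_single]
  · simp [asm, ev_cons_list]
  · simp [asm, ev_single]
  · simp [asm, ev_cons_list]

lemma hw_mem (φ : ℕ → P →* H) (ψ : ℕ → Q →* H) (K : Subgroup H) (h1 : ∀ p, φ 0 p ∈ K)
    (h2 : ∀ q, ψ 0 q ∈ K) (l : List (Option (B P Q))) (x : Bool) : hw φ ψ l x ∈ K := by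
  induction l with
  | nil => exact K.one_mem
  | cons c l ih =>
    refine K.mul_mem ?_ ih
    rcases c with _ | β
    · exact K.one_mem
    · cases obw l x
      · exact h1 _
      · exact h2 _

lemma SS_rec (φ : ℕ → P →* H) (ψ : ℕ → Q →* H) (K : Subgroup H) (h1 : ∀ p, φ 0 p ∈ K)
    (h2 : ∀ q, ψ 0 q ∈ K) (n : ℕ) :
    (fun f : Equiv.Perm (List Bool × H) => (f : List Bool × H → List Bool × H)) '' SS φ ψ n ⊆
      asm '' (Set.univ ×ˢ (((K : Set H) ×ˢ (K : Set H)) ×ˢ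
        ⋃ i ∈ Finset.range ((9 * n + 45) / 10 + 1),
          SS (sh φ) (sh ψ) i ×ˢ SS (sh φ) (sh ψ) ((9 * n + 45) / 10 - i))) := by
  rintro _ ⟨_, ⟨l, rfl, hl⟩, rfl⟩
  obtain ⟨β, L, h3, h4⟩ := exists_canon φ ψ l
  have h5 := wt_sw_canon β L
  dsimp only
  rw [← h3]
  generalize (some β :: cw L) = m at *
  refine ⟨_, ?_, asm_ev φ ψ m⟩
  refine ⟨trivial, ⟨hw_mem φ ψ K h1 h2 _ _, hw_mem φ ψ K h1 h2 _ _⟩, ?_⟩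
  simp only [Set.mem_iUnion]
  refine ⟨wt (sw m false), ?_, ⟨_, rfl, le_rfl⟩, ⟨_, rfl, ?_⟩⟩
  · simp; omega
  · omega

lemma SS_card_rec [Finite P] [Finite Q] (φ : ℕ → P →* H) (ψ : ℕ → Q →* H) (K : Subgroup H)
    [Finite K] (h1 : ∀ p, φ 0 p ∈ K) (h2 : ∀ q, ψ 0 q ∈ K) (n : ℕ) :
    (SS φ ψ n).ncard ≤ 4 * (Nat.card K * Nat.card K) *
      ∑ i ∈ Finset.range ((9 * n + 45) / 10 + 1),
        (SS (sh φ) (sh ψ) i).ncard * (SS (sh φ) (sh ψ) ((9 * n + 45) / 10 - i)).ncard := by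
  rw [← Set.ncard_image_of_injective (SS φ ψ n)
    (f := fun f : Equiv.Perm (List Bool × H) => (f : List Bool × H → List Bool × H))
    DFunLike.coe_injective]
  have hf : (⋃ i ∈ Finset.range ((9 * n + 45) / 10 + 1),
          SS (sh φ) (sh ψ) i ×ˢ SS (sh φ) (sh ψ) ((9 * n + 45) / 10 - i)).Finite := by
    refine Set.Finite.biUnion (Finset.finite_toSet _) fun i _ => ?_
    exact (SS_finite _ _ _).prod (SS_finite _ _ _)
  have hK : (K : Set H).Finite := Set.toFinite _
  have hF : (Set.univ ×ˢ (((K : Set H) ×ˢ (K : Set H)) ×ˢ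
        ⋃ i ∈ Finset.range ((9 * n + 45) / 10 + 1),
          SS (sh φ) (sh ψ) i ×ˢ SS (sh φ) (sh ψ) ((9 * n + 45) / 10 - i)) :
          Set ((Bool × Bool) × (H × H) × (Equiv.Perm (List Bool × H) × Equiv.Perm (List Bool × H)))).Finite :=
    Set.finite_univ.prod ((hK.prod hK).prod hf)
  refine (Set.ncard_le_ncard (SS_rec φ ψ K h1 h2 n) (hF.image _)).trans ?_
  refine (Set.ncard_image_le hF).trans ?_
  rw [Set.ncard_prod, Set.ncard_prod, Set.ncard_prod, ← mul_assoc, Set.ncard_univ]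
  have e1 : Nat.card (Bool × Bool) = 4 := by simp
  have e2 : (K : Set H).ncard = Nat.card K := rfl
  rw [e1, e2]
  refine Nat.mul_le_mul_left _ ?_
  refine (Finset.set_ncard_biUnion_le _ _).trans ?_
  refine Finset.sum_le_sum fun i _ => ?_
  rw [Set.ncard_prod]

/-- growth rate at most `lam` -/
def RR (P Q H : Type) [Group P] [Group Q] [Group H] (lam : ℝ) : Prop :=
  ∀ (φ : ℕ → P →* H) (ψ : ℕ → Q →* H), FinD φ ψ →
    ∃ C : ℝ, 0 < C ∧ ∀ n, ((SS φ ψ n).ncard : ℝ) ≤ C * lam ^ n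

lemma RR.mono {l1 l2 : ℝ} (h0 : 0 ≤ l1) (h : l1 ≤ l2) (hR : RR P Q H l1) : RR P Q H l2 := by
  intro φ ψ hF
  obtain ⟨C, hC, h1⟩ := hR φ ψ hF
  refine ⟨C, hC, fun n => (h1 n).trans ?_⟩
  gcongr

lemma RR_base [Finite P] [Finite Q] : RR P Q H (Nat.card (Option (B P Q)) + 1) := by
  intro φ ψ _
  refine ⟨1, one_pos, fun n => ?_⟩
  have := SS_card φ ψ n
  calc ((SS φ ψ n).ncard : ℝ) ≤ (Nat.card (Option (B P Q)) : ℝ) ^ n := by exact_mod_cast this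
    _ ≤ 1 * ((Nat.card (Option (B P Q)) : ℝ) + 1) ^ n := by
      rw [one_mul]; gcongr; linarith

lemma RR_step [Finite P] [Finite Q] (μ : ℝ) (hμ : 1 < μ) (hR : RR P Q H (μ ^ 20)) :
    RR P Q H (μ ^ 19) := by
  intro φ ψ hF
  obtain ⟨C, hC, h1⟩ := hR _ _ hF.sh
  obtain ⟨K, hK, hk1, hk2⟩ := hF 0
  have hKp : 0 < Nat.card K := Nat.card_pos
  have hμ0 : 0 < μ - 1 := by linarith
  refine ⟨4 * (Nat.card K * Nat.card K) * (1 / (μ - 1) + 6) * C ^ 2 * μ ^ 90, by positivity,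
    fun n => ?_⟩
  have h2 := SS_card_rec φ ψ K hk1 hk2 n
  set M := (9 * n + 45) / 10 with hM
  have h3 : ∀ i ∈ Finset.range (M + 1), ((SS (sh φ) (sh ψ) i).ncard : ℝ) *
      (SS (sh φ) (sh ψ) (M - i)).ncard ≤ C ^ 2 * (μ ^ 20) ^ M := by
    intro i hi
    have hi' : i ≤ M := by simp at hi; omega
    calc ((SS (sh φ) (sh ψ) i).ncard : ℝ) * (SS (sh φ) (sh ψ) (M - i)).ncard
        ≤ (C * (μ ^ 20) ^ i) * (C * (μ ^ 20) ^ (M - i)) := by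
          gcongr
          · exact h1 i
          · exact h1 _
      _ = C ^ 2 * ((μ ^ 20) ^ i * (μ ^ 20) ^ (M - i)) := by ring
      _ = C ^ 2 * (μ ^ 20) ^ M := by rw [← pow_add]; congr 2; omega
  have h4 : ((SS φ ψ n).ncard : ℝ) ≤ 4 * (Nat.card K * Nat.card K) *
      ((M + 1) * (C ^ 2 * (μ ^ 20) ^ M)) := by
    calc ((SS φ ψ n).ncard : ℝ) ≤ 4 * (Nat.card K * Nat.card K) *
      ∑ i ∈ Finset.range (M + 1),
        ((SS (sh φ) (sh ψ) i).ncard : ℝ) * (SS (sh φ) (sh ψ) (M - i)).ncard := by exact_mod_cast h2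
      _ ≤ 4 * (Nat.card K * Nat.card K) * ∑ i ∈ Finset.range (M + 1), C ^ 2 * (μ ^ 20) ^ M := by
        exact mul_le_mul_of_nonneg_left (Finset.sum_le_sum h3) (by positivity)
      _ = _ := by simp
  have h5 : (μ ^ 20) ^ M ≤ μ ^ 90 * (μ ^ 18) ^ n := by
    rw [← pow_mul, ← pow_mul, ← pow_add]
    exact pow_le_pow_right₀ hμ.le (by omega)
  have h6 : ((M : ℝ) + 1) ≤ (1 / (μ - 1) + 6) * μ ^ n := by
    have b := one_add_mul_le_pow (a := μ - 1) (by linarith) n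
    have b' : 1 + (n : ℝ) * (μ - 1) ≤ μ ^ n := by simpa using b
    have hM' : M ≤ n + 5 := by omega
    have hM'' : (M : ℝ) ≤ n + 5 := by exact_mod_cast hM'
    have c1 : (n : ℝ) ≤ 1 / (μ - 1) * μ ^ n := by
      rw [div_mul_eq_mul_div, le_div_iff₀ hμ0]; linarith
    have c2 : 1 ≤ μ ^ n := one_le_pow₀ hμ.le
    linarith
  calc ((SS φ ψ n).ncard : ℝ) ≤ _ := h4
    _ ≤ 4 * (Nat.card K * Nat.card K) *
      (((1 / (μ - 1) + 6) * μ ^ n) * (C ^ 2 * (μ ^ 90 * (μ ^ 18) ^ n))) := by gcongr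
    _ = _ := by ring

lemma RR_all [Finite P] [Finite Q] (lam : ℝ) (hl : 1 < lam) : RR P Q H lam := by
  set Λ : ℝ := Nat.card (Option (B P Q)) + 1 with hΛ
  have hΛ1 : 1 < Λ := by
    have : 0 < Nat.card (Option (B P Q)) := Nat.card_pos
    have : (0 : ℝ) < Nat.card (Option (B P Q)) := by exact_mod_cast this
    linarith
  have key : ∀ k : ℕ, RR P Q H (Λ ^ ((19 / 20 : ℝ) ^ k)) := by
    intro k
    induction k with
    | zero => simpa using RR_base
    | succ k ih =>
      have e := RR_step (P := P) (Q := Q) (H := H) (Λ ^ ((19 / 20 : ℝ) ^ k / 20))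
        (Real.one_lt_rpow hΛ1 (by positivity))
      have e1 : (19 / 20 : ℝ) ^ k / 20 * ((20 : ℕ) : ℝ) = (19 / 20 : ℝ) ^ k := by push_cast; ring
      have e2 : (19 / 20 : ℝ) ^ k / 20 * ((19 : ℕ) : ℝ) = (19 / 20 : ℝ) ^ (k + 1) := by
        push_cast; ring
      have e3 : (Λ ^ ((19 / 20 : ℝ) ^ k / 20)) ^ 20 = Λ ^ ((19 / 20 : ℝ) ^ k) := by
        rw [← Real.rpow_mul_natCast (by linarith), e1]
      have e4 : (Λ ^ ((19 / 20 : ℝ) ^ k / 20)) ^ 19 = Λ ^ ((19 / 20 : ℝ) ^ (k + 1)) := by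
        rw [← Real.rpow_mul_natCast (by linarith), e2]
      rw [e3, e4] at e
      exact e ih
  have t1 : Filter.Tendsto (fun k : ℕ => Λ ^ ((19 / 20 : ℝ) ^ k)) Filter.atTop (nhds (Λ ^ (0 : ℝ))) :=
    ((Real.continuous_const_rpow (by positivity)).tendsto 0).comp
      (tendsto_pow_atTop_nhds_zero_of_lt_one (r := (19 / 20 : ℝ)) (by norm_num) (by norm_num))
  rw [Real.rpow_zero] at t1
  obtain ⟨k, hk⟩ := (t1.eventually (gt_mem_nhds hl)).exists
  exact (key k).mono (by positivity) hk.le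

end
end ISG
namespace ISG
set_option linter.unusedSectionVars false
set_option linter.unusedSimpArgs false
open scoped commutatorElement
section
variable {P Q H : Type} [Group P] [Group Q] [Group H]

/-- the group -/
def WW (φ : ℕ → P →* H) (ψ : ℕ → Q →* H) : Subgroup (Equiv.Perm (List Bool × H)) :=
  Subgroup.closure (Set.range (pl φ ψ))

/-- letters as elements of the group -/
def tl (φ : ℕ → P →* H) (ψ : ℕ → Q →* H) (c : Option (B P Q)) : WW φ ψ :=
  ⟨pl φ ψ c, Subgroup.subset_closure ⟨c, rfl⟩⟩

/-- generating set -/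
noncomputable def TT [Finite P] [Finite Q] (φ : ℕ → P →* H) (ψ : ℕ → Q →* H) :
    Finset (WW φ ψ) := (Set.finite_range (tl φ ψ)).toFinset

lemma mem_TT [Finite P] [Finite Q] (φ : ℕ → P →* H) (ψ : ℕ → Q →* H) (x : WW φ ψ) :
    x ∈ (TT φ ψ : Set (WW φ ψ)) ↔ ∃ c, tl φ ψ c = x := by
  simp [TT]

lemma pl_inv (φ : ℕ → P →* H) (ψ : ℕ → Q →* H) (c : Option (B P Q)) :
    ∃ c', (pl φ ψ c)⁻¹ = pl φ ψ c' := by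
  rcases c with _ | β
  · exact ⟨none, inv_eq_of_mul_eq_one_left pa_mul_pa⟩
  · exact ⟨some β⁻¹, by simp [pl]⟩

lemma TT_gen [Finite P] [Finite Q] (φ : ℕ → P →* H) (ψ : ℕ → Q →* H) :
    Subgroup.closure (TT φ ψ : Set (WW φ ψ)) = ⊤ := by
  rw [show (TT φ ψ : Set (WW φ ψ)) = ((↑) : WW φ ψ → _) ⁻¹' (Set.range (pl φ ψ)) from ?_]
  · exact Subgroup.closure_closure_coe_preimage
  · ext x
    rw [mem_TT]
    constructor
    · rintro ⟨c, rfl⟩; exact ⟨c, rfl⟩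
    · rintro ⟨c, hc⟩; exact ⟨c, Subtype.ext hc⟩

lemma TT_word [Finite P] [Finite Q] (φ : ℕ → P →* H) (ψ : ℕ → Q →* H) (m : List (WW φ ψ))
    (hm : ∀ x ∈ m, x ∈ (TT φ ψ : Set (WW φ ψ)) ∨ x⁻¹ ∈ (TT φ ψ : Set (WW φ ψ))) :
    ∃ l : List (Option (B P Q)), l.length = m.length ∧ ev φ ψ l = (m.prod : WW φ ψ) := by
  induction m with
  | nil => exact ⟨[], rfl, rfl⟩
  | cons x m ih =>
    obtain ⟨l, h1, h2⟩ := ih fun y hy => hm y (List.mem_cons_of_mem _ hy)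
    have : ∃ c, pl φ ψ c = (x : Equiv.Perm (List Bool × H)) := by
      rcases hm x List.mem_cons_self with h | h
      · obtain ⟨c, rfl⟩ := (mem_TT _ _ _).1 h
        exact ⟨c, rfl⟩
      · obtain ⟨c, hc⟩ := (mem_TT _ _ _).1 h
        obtain ⟨c', hc'⟩ := pl_inv φ ψ c
        refine ⟨c', ?_⟩
        rw [← hc']
        have : pl φ ψ c = (x : Equiv.Perm (List Bool × H))⁻¹ := congrArg Subtype.val hc
        rw [this, inv_inv]
    obtain ⟨c, hc⟩ := this
    exact ⟨c :: l, by simp [h1], by rw [ev_cons, h2, hc]; simp⟩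

lemma wt_le (l : List (Option (B P Q))) : wt l ≤ 5 * l.length := by
  induction l with
  | nil => simp [wt]
  | cons c l ih => have := wl_le c; rw [wt_cons, List.length_cons]; omega

lemma TT_subexp [Finite P] [Finite Q] (φ : ℕ → P →* H) (ψ : ℕ → Q →* H) (hF : FinD φ ψ) :
    SubexpGrowth (TT φ ψ : Set (WW φ ψ)) := by
  intro lam hlam
  set μ : ℝ := lam ^ (1 / 10 : ℝ) with hμ
  have hμ1 : 1 < μ := Real.one_lt_rpow hlam (by norm_num)
  have hμ10 : μ ^ 10 = lam := by
    rw [hμ, ← Real.rpow_mul_natCast (by linarith)]; norm_num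
  obtain ⟨C, hC, h1⟩ := RR_all (P := P) (Q := Q) (H := H) μ hμ1 φ ψ hF
  have h2 : ∀ n, (Nat.card (wordBall (TT φ ψ : Set (WW φ ψ)) n) : ℝ) ≤ C * μ ^ (5 * n) := by
    intro n
    refine le_trans ?_ (h1 (5 * n))
    have : (wordBall (TT φ ψ : Set (WW φ ψ)) n).ncard ≤ (SS φ ψ (5 * n)).ncard := by
      rw [← Set.ncard_image_of_injective _ (Subtype.val_injective (p := fun x => x ∈ WW φ ψ))]
      refine Set.ncard_le_ncard ?_ (SS_finite _ _ _)
      rintro _ ⟨_, ⟨m, hm, hn, rfl⟩, rfl⟩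
      obtain ⟨l, h3, h4⟩ := TT_word φ ψ m hm
      refine ⟨l, h4, (wt_le l).trans ?_⟩
      omega
    exact_mod_cast this
  have t := (tendsto_pow_atTop_atTop_of_one_lt (one_lt_pow₀ hμ1 (n := 5) (by norm_num)))
  filter_upwards [t.eventually_gt_atTop C] with n hn
  refine (h2 n).trans_lt ?_
  rw [← hμ10]
  rw [← pow_mul] at hn ⊢
  have : μ ^ (10 * n) = μ ^ (5 * n) * μ ^ (5 * n) := by rw [← pow_add]; congr 1; omega
  rw [this]
  have : 0 < μ ^ (5 * n) := by positivity
  gcongr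

/-- tree action of a tree letter -/
def lt : Option V → List Bool → List Bool
  | none, v => flipHd v
  | some x, v => tb x v

/-- tree action of a word -/
def ta (l : List (Option V)) (v : List Bool) : List Bool := l.foldr lt v

lemma ta_append (l l' : List (Option V)) (v : List Bool) : ta (l ++ l') v = ta l (ta l' v) := by
  simp [ta]

lemma V_sq : ∀ x : V, x * x = 1 := by decide

lemma lt_lt (c : Option V) (v : List Bool) : lt c (lt c v) = v := by
  rcases c with _ | x
  · exact flipHd_flipHd v
  · simp only [lt]; rw [← tb_mul, V_sq, tb_one]

lemma tb_length (x : V) (v : List Bool) : (tb x v).length = v.length := by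
  induction v generalizing x with
  | nil => rfl
  | cons b v ih =>
    cases b
    · simp only [tb]; split_ifs
      · cases v <;> simp [flipHd]
      · simp
    · simp [tb, ih]

lemma lt_length (c : Option V) (v : List Bool) : (lt c v).length = v.length := by
  rcases c with _ | x
  · cases v <;> simp [lt, flipHd]
  · exact tb_length x v

lemma ta_length (l : List (Option V)) (v : List Bool) : (ta l v).length = v.length := by
  induction l with
  | nil => rfl
  | cons c l ih => simp only [ta, List.foldr_cons, lt_length] at *; exact ih

lemma ta_reverse (l : List (Option V)) (v : List Bool) : ta l (ta l.reverse v) = v := by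
  induction l generalizing v with
  | nil => rfl
  | cons c l ih =>
    rw [List.reverse_cons, ta_append]
    show lt c (ta l (ta l.reverse (lt c v))) = v
    rw [ih, lt_lt]

/-- lifting letters to the subtree at `1` -/
def lf : Option V → List (Option V)
  | none => [none, some vb, none]
  | some x => [some (rotInv x)]

lemma ta_lf (c : Option V) (v : List Bool) : ta (lf c) (true :: v) = true :: lt c v := by
  rcases c with _ | x
  · simp [ta, lf, lt, flipHd, tb, om_vb]
  · simp [ta, lf, lt, tb, rot_rotInv]

lemma ta_flatMap (l : List (Option V)) (v : List Bool) :
    ta (l.flatMap lf) (true :: v) = true :: ta l v := by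
  induction l with
  | nil => rfl
  | cons c l ih => rw [List.flatMap_cons, ta_append, ih, ta_lf]; rfl

/-- connecting words -/
def gam : ℕ → List (Option V)
  | 0 => [none]
  | s + 1 => (gam s).flatMap lf

/-- the special vertex -/
def v0 (s : ℕ) : List Bool := List.replicate s true ++ [false]

lemma v0_succ (s : ℕ) : v0 (s + 1) = true :: v0 s := by simp [v0, List.replicate_succ]

lemma gam_v0 (s : ℕ) : ta (gam s) (List.replicate (s + 1) true) = v0 s := by
  induction s with
  | zero => rfl
  | succ s ih => rw [List.replicate_succ, gam, ta_flatMap, ih, v0_succ]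

lemma gam_unique (s t : ℕ) (h : ta (gam s) (List.replicate (t + 1) true) = v0 t) : t = s := by
  induction s generalizing t with
  | zero =>
    rcases t with _ | t
    · rfl
    · simp [gam, ta, lt, flipHd, List.replicate_succ, v0_succ] at h
  | succ s ih =>
    rw [List.replicate_succ, gam, ta_flatMap] at h
    rcases t with _ | t
    · simp [v0] at h
    · rw [v0_succ] at h
      rw [ih t (List.cons.inj h).2]

lemma dec_left (φ : ℕ → P →* H) (ψ : ℕ → Q →* H) (p : P) (q : Q) (s : ℕ) :
    dec φ ψ p q (v0 s) = φ s p := by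
  induction s generalizing φ ψ with
  | zero => simp [v0, dec]
  | succ s ih =>
    rw [v0_succ, dec, ih, if_neg (by simp [v0])]; simp

lemma dec_right (φ : ℕ → P →* H) (ψ : ℕ → Q →* H) (p : P) (q : Q) (s : ℕ) :
    dec φ ψ p q (List.replicate (s + 1) true) = ψ s q := by
  induction s generalizing φ ψ with
  | zero => simp [dec]
  | succ s ih =>
    rw [List.replicate_succ, dec, ih, if_neg (by simp)]; simp

lemma dec_cases (φ : ℕ → P →* H) (ψ : ℕ → Q →* H) (v : List Bool) :
    (∃ s, v = v0 s) ∨ (∃ s, v = List.replicate (s + 1) true) ∨ ∀ p q, dec φ ψ p q v = 1 := by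
  induction v generalizing φ ψ with
  | nil => exact Or.inr (Or.inr fun _ _ => rfl)
  | cons b v ih =>
    cases b
    · by_cases hv : v = []
      · exact Or.inl ⟨0, by simp [hv, v0]⟩
      · exact Or.inr (Or.inr fun _ _ => by simp [dec, hv])
    · by_cases hv : v = []
      · exact Or.inr (Or.inl ⟨0, by simp [hv]⟩)
      · rcases ih (fun n => φ (n + 1)) (fun n => ψ (n + 1)) with ⟨s, h⟩ | ⟨s, h⟩ | h
        · exact Or.inl ⟨s + 1, by rw [v0_succ, h]⟩
        · exact Or.inr (Or.inl ⟨s + 1, by rw [h]; simp [List.replicate_succ]⟩)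
        · exact Or.inr (Or.inr fun _ _ => by simp [dec, hv, h])

/-- decoration hom of the first factor at a vertex -/
def decL (φ : ℕ → P →* H) (ψ : ℕ → Q →* H) (v : List Bool) : P →* H where
  toFun p := dec φ ψ p 1 v
  map_one' := dec_one φ ψ v
  map_mul' p p' := by
    have := dec_mul φ ψ p p' 1 1 1 v
    rwa [tb_one, mul_one] at this

/-- decoration hom of the second factor at a vertex -/
def decR (φ : ℕ → P →* H) (ψ : ℕ → Q →* H) (v : List Bool) : Q →* H where
  toFun q := dec φ ψ 1 q v
  map_one' := dec_one φ ψ v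
  map_mul' p p' := by
    have := dec_mul φ ψ 1 1 p p' 1 v
    rwa [tb_one, mul_one] at this

lemma decL_eq_one (φ : ℕ → P →* H) (ψ : ℕ → Q →* H) (v : List Bool) (h : ∀ s, v ≠ v0 s) :
    decL φ ψ v = 1 := by
  ext p
  rcases dec_cases φ ψ v with ⟨s, hs⟩ | ⟨s, hs⟩ | hs
  · exact absurd hs (h s)
  · simp [decL, hs, dec_right]
  · simp [decL, hs]

lemma decR_eq_one (φ : ℕ → P →* H) (ψ : ℕ → Q →* H) (v : List Bool)
    (h : ∀ s, v ≠ List.replicate (s + 1) true) : decR φ ψ v = 1 := by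
  ext p
  rcases dec_cases φ ψ v with ⟨s, hs⟩ | ⟨s, hs⟩ | hs
  · simp [decR, hs, dec_left]
  · exact absurd hs (h s)
  · simp [decR, hs]

/-- local decoration hom -/
noncomputable def locH (φ : ℕ → P →* H) (ψ : ℕ → Q →* H) (s : ℕ) (v : List Bool) :
    Monoid.Coprod P Q →* H :=
  Monoid.Coprod.lift (decL φ ψ v) (decR φ ψ (ta (gam s).reverse v))

lemma locH_v0 (φ : ℕ → P →* H) (ψ : ℕ → Q →* H) (s : ℕ) :
    locH φ ψ s (v0 s) = Monoid.Coprod.lift (φ s) (ψ s) := by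
  have h : ta (gam s).reverse (v0 s) = List.replicate (s + 1) true := by
    have := ta_reverse (gam s).reverse (List.replicate (s + 1) true)
    rwa [List.reverse_reverse, gam_v0] at this
  unfold locH
  rw [h]
  congr 1
  · ext p; simp [decL, dec_left]
  · ext q; simp only [decR, MonoidHom.coe_mk, OneHom.coe_mk, dec_right]

lemma locH_ne (φ : ℕ → P →* H) (ψ : ℕ → Q →* H) (s : ℕ) (v : List Bool) (hv : v ≠ v0 s)
    (w : Monoid.Coprod P Q) (h1 : Monoid.Coprod.fst w = 1) (h2 : Monoid.Coprod.snd w = 1) :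
    locH φ ψ s v w = 1 := by
  by_cases h : ∀ t, v ≠ v0 t
  · have : locH φ ψ s v = (decR φ ψ (ta (gam s).reverse v)).comp Monoid.Coprod.snd := by
      unfold locH
      rw [decL_eq_one φ ψ v h]
      ext <;> simp
    rw [this]; simp [h2]
  · push Not at h
    obtain ⟨t, ht⟩ := h
    have h3 : ∀ a, ta (gam s).reverse v ≠ List.replicate (a + 1) true := by
      intro a ha
      have hl := ta_length (gam s).reverse v
      rw [ha, ht] at hl
      have hat : a = t := by simpa [v0] using hl
      have e := ta_reverse (gam s) v
      rw [ha, ht, hat] at e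
      exact hv (by rw [ht, gam_unique s t e])
    have : locH φ ψ s v = (decL φ ψ v).comp Monoid.Coprod.fst := by
      unfold locH
      rw [decR_eq_one φ ψ _ h3]
      ext <;> simp
    rw [this]; simp [h1]

/-- embed tree letters -/
def emb (P Q : Type) [Group P] [Group Q] (l : List (Option V)) : List (Option (B P Q)) :=
  l.map (Option.map fun x => (x, 1, 1))

lemma ev_emb (φ : ℕ → P →* H) (ψ : ℕ → Q →* H) (l : List (Option V)) (v : List Bool) (h : H) :
    ev φ ψ (emb P Q l) (v, h) = (ta l v, h) := by
  induction l with
  | nil => rfl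
  | cons c l ih =>
    simp only [emb, List.map_cons] at ih ⊢
    rw [ev_cons, Equiv.Perm.mul_apply, ih]
    rcases c with _ | x
    · rfl
    · simp [pl, pB, fB, dec_one, ta, lt]

/-- existence of words -/
lemma loc_word (s : ℕ) (w : Monoid.Coprod P Q) : ∃ l : List (Option (B P Q)),
    ∀ (H : Type) [Group H] (φ : ℕ → P →* H) (ψ : ℕ → Q →* H) (v : List Bool) (h : H),
      ev φ ψ l (v, h) = (v, locH φ ψ s v w * h) := by
  induction w using Monoid.Coprod.induction_on with
  | inl p =>
    refine ⟨[some (1, p, 1)], fun H _ φ ψ v h => ?_⟩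
    simp [ev, pl, pB, fB, tb_one, locH, decL]
  | inr q =>
    refine ⟨emb P Q (gam s) ++ [some (1, 1, q)] ++ emb P Q (gam s).reverse,
      fun H _ φ ψ v h => ?_⟩
    rw [ev_append, ev_append, Equiv.Perm.mul_apply, ev_emb, Equiv.Perm.mul_apply]
    have : ev φ ψ [some (1, 1, q)] (ta (gam s).reverse v, h) =
        (ta (gam s).reverse v, locH φ ψ s v (Monoid.Coprod.inr q) * h) := by
      simp [ev, pl, pB, fB, tb_one, locH, decR]
    rw [this, ev_emb, ta_reverse]
  | mul x y hx hy =>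
    obtain ⟨l, hl⟩ := hx
    obtain ⟨l', hl'⟩ := hy
    refine ⟨l ++ l', fun H _ φ ψ v h => ?_⟩
    rw [ev_append, Equiv.Perm.mul_apply, hl', hl, map_mul, mul_assoc]

open Classical in
/-- decoration at a single vertex -/
noncomputable def dl (v : List Bool) : H →* Equiv.Perm (List Bool × H) where
  toFun h :=
    { toFun := fun z => if z.1 = v then (z.1, h * z.2) else z
      invFun := fun z => if z.1 = v then (z.1, h⁻¹ * z.2) else z
      left_inv := fun z => by rcases z with ⟨a, b⟩; by_cases hz : a = v <;> simp [hz]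
      right_inv := fun z => by rcases z with ⟨a, b⟩; by_cases hz : a = v <;> simp [hz] }
  map_one' := by ext1 z; simp
  map_mul' h h' := by ext1 z; by_cases hz : z.1 = v <;> simp [hz, mul_assoc]

lemma dl_self (v : List Bool) (h h' : H) : dl v h (v, h') = (v, h * h') := by simp [dl]

lemma dl_inj (v : List Bool) : Function.Injective (dl (H := H) v) := by
  intro h h' e
  have := congrArg (fun f : Equiv.Perm (List Bool × H) => f (v, 1)) e
  simpa [dl] using this

lemma loc (s : ℕ) (w : Monoid.Coprod P Q) (h1 : Monoid.Coprod.fst w = 1)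
    (h2 : Monoid.Coprod.snd w = 1) : ∃ l : List (Option (B P Q)),
    ∀ (H : Type) [Group H] (φ : ℕ → P →* H) (ψ : ℕ → Q →* H),
      ev φ ψ l = dl (v0 s) (Monoid.Coprod.lift (φ s) (ψ s) w) := by
  obtain ⟨l, hl⟩ := loc_word (P := P) (Q := Q) s w
  refine ⟨l, fun H _ φ ψ => ?_⟩
  ext1 ⟨v, h⟩
  rw [hl]
  by_cases hv : v = v0 s
  · subst hv
    rw [locH_v0, dl_self]
  · rw [locH_ne φ ψ s v hv w h1 h2]
    simp [dl, hv]

/-- each letter acts at vertices of length `s + 1` by the decorations of index `s` -/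
lemma track (φ : ℕ → P →* H) (ψ : ℕ → Q →* H) (s : ℕ) (l : List (Option (B P Q)))
    (v : List Bool) (hv : v.length = s + 1) (h : H) :
    ∃ m : List H, m.length ≤ l.length ∧ (∀ x ∈ m, (∃ p, φ s p = x) ∨ (∃ q, ψ s q = x)) ∧
      (ev φ ψ l (v, h)).2 = m.prod * h ∧ (ev φ ψ l (v, h)).1.length = s + 1 := by
  induction l with
  | nil => exact ⟨[], by simp, by simp, by simp [ev_nil], by simp [ev_nil, hv]⟩
  | cons c l ih =>
    obtain ⟨m, h1, h2, h3, h4⟩ := ih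
    rw [ev_cons, Equiv.Perm.mul_apply]
    generalize ev φ ψ l (v, h) = z at *
    rcases c with _ | β
    · exact ⟨m, by simp; omega, h2, h3, by
        show (lt none z.1).length = _
        rw [lt_length, h4]⟩
    · have hlen : (pl φ ψ (some β) z).1.length = s + 1 := by
        show (lt (some β.1) z.1).length = _
        rw [lt_length, h4]
      have hval : (pl φ ψ (some β) z).2 = dec φ ψ β.2.1 β.2.2 z.1 * z.2 := rfl
      rcases dec_cases φ ψ z.1 with ⟨t, ht⟩ | ⟨t, ht⟩ | ht
      · have : t = s := by rw [ht] at h4; simpa [v0] using h4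
        subst this
        rw [ht, dec_left, h3] at hval
        exact ⟨φ t β.2.1 :: m, by simpa using h1, by
          intro x hx
          rcases List.mem_cons.1 hx with rfl | hx
          · exact Or.inl ⟨_, rfl⟩
          · exact h2 x hx, by rw [hval, List.prod_cons, mul_assoc], hlen⟩
      · have : t = s := by rw [ht] at h4; simpa using h4
        subst this
        rw [ht, dec_right, h3] at hval
        exact ⟨ψ t β.2.2 :: m, by simpa using h1, by
          intro x hx
          rcases List.mem_cons.1 hx with rfl | hx
          · exact Or.inr ⟨_, rfl⟩
          · exact h2 x hx, by rw [hval, List.prod_cons, mul_assoc], hlen⟩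
      · rw [ht, one_mul, h3] at hval
        exact ⟨m, by simp; omega, h2, hval, hlen⟩

end
end ISG
namespace ISG
set_option linter.unusedSectionVars false
set_option linter.unusedSimpArgs false
open scoped commutatorElement
section
variable {G : Type} [Group G]

/-- twisted shift -/
def uu (G : Type) [Group G] (N : ℕ) : Equiv.Perm (Fin (N + 2) → G) where
  toFun x := Fin.snoc (α := fun _ => G) (fun j : Fin (N + 1) => x j.succ) (x (Fin.last _) * x 0)
  invFun x := Fin.cons (α := fun _ => G) ((x (Fin.last N).castSucc)⁻¹ * x (Fin.last _))
    (fun j : Fin (N + 1) => x j.castSucc)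
  left_inv x := by
    funext i
    refine Fin.cases ?_ (fun j => ?_) i
    · beta_reduce
      rw [Fin.cons_zero, Fin.snoc_castSucc, Fin.snoc_last, Fin.succ_last]; group
    · beta_reduce
      rw [Fin.cons_succ, Fin.snoc_castSucc]
  right_inv x := by
    funext i
    refine Fin.lastCases ?_ (fun j => ?_) i
    · beta_reduce
      rw [Fin.snoc_last, Fin.cons_zero, ← Fin.succ_last, Fin.cons_succ]; group
    · beta_reduce
      rw [Fin.snoc_castSucc, Fin.cons_succ]

lemma uu_castSucc (N : ℕ) (x : Fin (N + 2) → G) (j : Fin (N + 1)) :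
    uu G N x j.castSucc = x j.succ :=
  Fin.snoc_castSucc (α := fun _ => G) (x (Fin.last _) * x 0) (fun j : Fin (N + 1) => x j.succ) j

lemma uu_last (N : ℕ) (x : Fin (N + 2) → G) :
    uu G N x (Fin.last _) = x (Fin.last _) * x 0 :=
  Fin.snoc_last (α := fun _ => G) (x (Fin.last _) * x 0) (fun j : Fin (N + 1) => x j.succ)

lemma uu_inv_succ (N : ℕ) (x : Fin (N + 2) → G) (j : Fin (N + 1)) :
    (uu G N)⁻¹ x j.succ = x j.castSucc := rfl

/-- multiplication on coordinates beyond `i0` -/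
def vv (N : ℕ) (i0 : Fin (N + 2)) (g : G) : Equiv.Perm (Fin (N + 2) → G) :=
  Equiv.mulLeft fun i => if i0 < i then g else 1

lemma vv_apply (N : ℕ) (i0 : Fin (N + 2)) (g : G) (x) (i) :
    vv N i0 g x i = (if i0 < i then g else 1) * x i := rfl

lemma vv_inv_apply (N : ℕ) (i0 : Fin (N + 2)) (g : G) (x) (i) :
    (vv N i0 g)⁻¹ x i = (if i0 < i then g⁻¹ else 1) * x i := by
  show ((fun i => if i0 < i then g else 1)⁻¹ * x : Fin (N + 2) → G) i = _
  simp only [Pi.mul_apply, Pi.inv_apply]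
  split_ifs <;> simp

/-- multiplication at coordinate `i0` -/
def dd (N : ℕ) (i0 : Fin (N + 2)) : G →* Equiv.Perm (Fin (N + 2) → G) :=
  (MulAction.toPermHom (Fin (N + 2) → G) (Fin (N + 2) → G)).comp (MonoidHom.mulSingle (fun _ => G) i0)

lemma dd_apply (N : ℕ) (i0 : Fin (N + 2)) (g : G) (x) (i) :
    dd N i0 g x i = (if i = i0 then g else 1) * x i := by
  show (Pi.mulSingle (M := fun _ => G) i0 g * x : Fin (N + 2) → G) i = _
  simp [Pi.mulSingle_apply]

lemma comm_uv (N : ℕ) (i0 : Fin (N + 2)) (hi : i0 < Fin.last _) (g : G) :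
    ⁅uu G N, vv N i0 g⁆ = dd N i0 g := by
  have : uu G N * vv N i0 g = dd N i0 g * (vv N i0 g * uu G N) := by
    ext x i
    simp only [Equiv.Perm.mul_apply]
    rw [dd_apply, vv_apply]
    refine Fin.lastCases ?_ (fun j => ?_) i
    · rw [uu_last, uu_last, vv_apply, vv_apply, if_pos hi, if_neg (by simp), if_neg hi.ne']
      simp [mul_assoc]
    · rw [uu_castSucc, uu_castSucc, vv_apply]
      have h1 : i0 < j.succ ↔ i0.1 < j.1 + 1 := by rw [Fin.lt_def]; simp
      have h2 : i0 < j.castSucc ↔ i0.1 < j.1 := by rw [Fin.lt_def]; simp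
      have h3 : j.castSucc = i0 ↔ j.1 = i0.1 := by rw [Fin.ext_iff]; simp
      simp only [h1, h2, h3]
      rcases lt_trichotomy i0.1 j.1 with h | h | h
      · rw [if_pos (by omega), if_neg (by omega), if_pos h, one_mul]
      · rw [if_pos (by omega), if_pos (by omega), if_neg (by omega), one_mul]
      · rw [if_neg (by omega), if_neg (by omega), if_neg (by omega), one_mul, one_mul]
  rw [commutatorElement_def, this]; group

/-- tracking of one coordinate -/
def Tr (S : Set G) (N : ℕ) (σ : Equiv.Perm (Fin (N + 2) → G)) (n : ℕ) : Prop :=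
  ∀ p : Fin (N + 2), n ≤ p.1 → p.1 + n ≤ N + 1 → ∃ p' : Fin (N + 2), p'.1 ≤ p.1 + n ∧ p.1 ≤ p'.1 + n ∧
    ∃ m : List G, m.length ≤ n ∧ (∀ x ∈ m, x ∈ S ∨ x⁻¹ ∈ S) ∧ ∀ x, σ x p' = m.prod * x p

lemma Tr.mono {S : Set G} {N : ℕ} {σ : Equiv.Perm (Fin (N + 2) → G)} {n n' : ℕ} (h : Tr S N σ n)
    (hn : n ≤ n') : Tr S N σ n' := by
  intro p h1 h2
  obtain ⟨p', h3, h4, m, h5, h6⟩ := h p (by omega) (by omega)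
  exact ⟨p', by omega, by omega, m, by omega, h6⟩

lemma Tr.one (S : Set G) (N : ℕ) : Tr S N 1 0 := fun p _ _ =>
  ⟨p, by omega, by omega, [], by simp, by simp, by simp⟩

lemma Tr.mul {S : Set G} {N : ℕ} {σ τ : Equiv.Perm (Fin (N + 2) → G)} {n n' : ℕ} (h : Tr S N σ n)
    (h' : Tr S N τ n') : Tr S N (σ * τ) (n + n') := by
  intro p h1 h2
  obtain ⟨p', h3, h4, m, h5, h6, h7⟩ := h' p (by omega) (by omega)
  obtain ⟨p'', k3, k4, m', k5, k6, k7⟩ := h p' (by omega) (by omega)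
  refine ⟨p'', by omega, by omega, m' ++ m, by simp; omega, ?_, fun x => ?_⟩
  · intro x hx
    rcases List.mem_append.1 hx with hx | hx
    · exact k6 x hx
    · exact h6 x hx
  · rw [Equiv.Perm.mul_apply, k7, h7, List.prod_append, mul_assoc]

lemma Tr.uu (S : Set G) (N : ℕ) : Tr S N (uu G N) 1 := by
  intro p h1 h2
  obtain ⟨j, rfl⟩ : ∃ j : Fin (N + 1), p = j.succ := ⟨p.pred (by intro h; simp [h] at h1), by simp⟩
  exact ⟨j.castSucc, by simp; omega, by simp, [], by simp, by simp, fun x => by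
    rw [uu_castSucc]; simp⟩

lemma Tr.uu_inv (S : Set G) (N : ℕ) : Tr S N (ISG.uu G N)⁻¹ 1 := by
  intro p h1 h2
  obtain ⟨j, rfl⟩ : ∃ j : Fin (N + 1), p = j.castSucc := ⟨⟨p.1, by omega⟩, by ext; simp⟩
  exact ⟨j.succ, by simp, by simp; omega, [], by simp, by simp, fun x => by
    rw [uu_inv_succ]; simp⟩

lemma Tr.vv (S : Set G) (N : ℕ) (i0 : Fin (N + 2)) (g : G) (hg : g ∈ S) : Tr S N (vv N i0 g) 1 := by
  intro p h1 h2
  by_cases h : i0 < p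
  · exact ⟨p, by omega, by omega, [g], by simp, by simp [hg], fun x => by simp [vv_apply, h]⟩
  · exact ⟨p, by omega, by omega, [], by simp, by simp, fun x => by simp [vv_apply, h]⟩

lemma Tr.vv_inv (S : Set G) (N : ℕ) (i0 : Fin (N + 2)) (g : G) (hg : g ∈ S) :
    Tr S N (ISG.vv N i0 g)⁻¹ 1 := by
  intro p h1 h2
  by_cases h : i0 < p
  · exact ⟨p, by omega, by omega, [g⁻¹], by simp, by simp [hg], fun x => by simp [vv_inv_apply, h]⟩
  · exact ⟨p, by omega, by omega, [], by simp, by simp, fun x => by simp [vv_inv_apply, h]⟩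

lemma Tr.dd (S : Set G) (N : ℕ) (i0 : Fin (N + 2)) (g : G) (n : ℕ) (h1 : n ≤ i0.1)
    (h2 : i0.1 + n ≤ N + 1) (h : Tr S N (dd N i0 g) n) :
    ∃ m : List G, m.length ≤ n ∧ (∀ x ∈ m, x ∈ S ∨ x⁻¹ ∈ S) ∧ m.prod = g := by
  obtain ⟨p', -, -, m, h5, h6, h7⟩ := h i0 h1 h2
  refine ⟨m, h5, h6, ?_⟩
  have := h7 fun i => if i = i0 then 1 else g
  rw [dd_apply] at this
  by_cases hp : p' = i0 <;> simp [hp] at this <;> exact this.symm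

end

section
variable {κ : Type} [DecidableEq κ] [Fintype κ] {Ω : Type}

/-- index set -/
abbrev II (κ : Type) := κ → ZMod 3

/-- basis vectors -/
def ee (k : κ) : II κ := Pi.single k 1

lemma ee_inj {k l : κ} (h : (ee k : II κ) = ee l) : k = l := by
  by_contra hne
  have := congrFun h k
  simp [ee, hne] at this

/-- the conjugators -/
noncomputable def yy (z : κ → Equiv.Perm Ω) (i : II κ) : Equiv.Perm Ω :=
  open Classical in if h : ∃ m, i = -ee m then (z h.choose)⁻¹ else 1

lemma yy_neg (z : κ → Equiv.Perm Ω) (m : κ) : yy z (-ee m) = (z m)⁻¹ := by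
  have h : ∃ m', (-ee m : II κ) = -ee m' := ⟨m, rfl⟩
  rw [yy, dif_pos h]
  have := ee_inj (neg_injective h.choose_spec)
  rw [← this]

lemma yy_other (z : κ → Equiv.Perm Ω) (i : II κ) (h : ∀ m, i ≠ -ee m) : yy z i = 1 := by
  rw [yy, dif_neg]; simpa using h

/-- sum of two basis vectors is not a basis vector -/
lemma ee_add_ne (k l m : κ) : (ee k + ee l : II κ) ≠ ee m := by
  intro h
  have := congrArg (fun f : II κ => ∑ i, f i) h
  simp [ee, Finset.sum_add_distrib] at this

/-- translations -/
def ph (κ Ω : Type) : Multiplicative (II κ) →* Equiv.Perm (II κ × Ω) where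
  toFun j := Equiv.prodShear (Equiv.addRight j.toAdd) fun _ => Equiv.refl Ω
  map_one' := by ext1 ⟨i, x⟩; simp
  map_mul' a b := by ext1 ⟨i, x⟩; simp [add_comm, add_left_comm]

lemma ph_apply (j : Multiplicative (II κ)) (i : II κ) (x : Ω) :
    ph κ Ω j (i, x) = (i + j.toAdd, x) := rfl

/-- diagonal permutations -/
def dg : (II κ → Equiv.Perm Ω) →* Equiv.Perm (II κ × Ω) where
  toFun y := Equiv.prodShear (Equiv.refl _) y
  map_one' := by ext1 ⟨i, x⟩; simp
  map_mul' a b := by ext1 ⟨i, x⟩; simp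

lemma dg_apply (y : II κ → Equiv.Perm Ω) (i : II κ) (x : Ω) : dg y (i, x) = (i, y i x) := rfl

/-- twisted translations -/
noncomputable def ps (z : κ → Equiv.Perm Ω) : Multiplicative (II κ) →* Equiv.Perm (II κ × Ω) :=
  (MulAut.conj (dg (yy z))).toMonoidHom.comp (ph κ Ω)

lemma ps_eq (z : κ → Equiv.Perm Ω) (j) : ps z j = dg (yy z) * ph κ Ω j * dg (yy z)⁻¹ := by
  rw [map_inv]; rfl

lemma ps_apply (z : κ → Equiv.Perm Ω) (j : Multiplicative (II κ)) (i : II κ) (x : Ω) :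
    ps z j (i, x) = (i + j.toAdd, (yy z (i + j.toAdd) * (yy z i)⁻¹) x) := by
  rw [ps_eq, Equiv.Perm.mul_apply, Equiv.Perm.mul_apply, dg_apply, ph_apply, dg_apply]; rfl

lemma ps_ph (z : κ → Equiv.Perm Ω) (j : Multiplicative (II κ)) :
    ps z j * (ph κ Ω j)⁻¹ = dg fun i => yy z i * (yy z (i - j.toAdd))⁻¹ := by
  rw [mul_inv_eq_iff_eq_mul]
  ext1 ⟨i, x⟩
  rw [Equiv.Perm.mul_apply, ps_apply, ph_apply, dg_apply]
  simp

/-- the commutator words -/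
noncomputable def ww (k l : κ) : Monoid.Coprod (Multiplicative (II κ)) (Multiplicative (II κ)) :=
  ⁅Monoid.Coprod.inr (Multiplicative.ofAdd (ee k)) * (Monoid.Coprod.inl (Multiplicative.ofAdd (ee k)))⁻¹,
   Monoid.Coprod.inr (Multiplicative.ofAdd (ee l)) * (Monoid.Coprod.inl (Multiplicative.ofAdd (ee l)))⁻¹⁆

lemma ww_fst (k l : κ) : Monoid.Coprod.fst (ww k l) = 1 := by
  simp [ww, map_commutatorElement, commutatorElement_eq_one_iff_mul_comm, mul_comm]

lemma ww_snd (k l : κ) : Monoid.Coprod.snd (ww k l) = 1 := by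
  simp [ww, map_commutatorElement, commutatorElement_eq_one_iff_mul_comm, mul_comm]

lemma ww_lift (z : κ → Equiv.Perm Ω) (k l : κ) (hkl : k ≠ l) :
    Monoid.Coprod.lift (ph κ Ω) (ps z) (ww k l) = dg (Pi.mulSingle 0 ⁅z k, z l⁆) := by
  rw [ww, map_commutatorElement]
  simp only [map_mul, map_inv, Monoid.Coprod.lift_apply_inl, Monoid.Coprod.lift_apply_inr]
  rw [ps_ph, ps_ph, ← map_commutatorElement]
  congr 1
  funext i
  show ⁅yy z i * (yy z (i - ee k))⁻¹, yy z i * (yy z (i - ee l))⁻¹⁆ = _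
  by_cases hi : i = 0
  · subst hi
    have h0 : yy z 0 = 1 := yy_other z 0 fun m h => by
      have := congrFun h m
      simp [ee] at this
    rw [h0, zero_sub, zero_sub, yy_neg, yy_neg]; simp
  · rw [Pi.mulSingle_eq_of_ne hi, commutatorElement_eq_one_iff_mul_comm]
    by_cases hm : ∃ m, i = -ee m
    · obtain ⟨m, rfl⟩ := hm
      have h1 : ∀ k, yy z (-ee m - ee k) = 1 := fun k => yy_other z _ fun l h => by
        apply ee_add_ne m k l
        rw [← neg_inj, ← h]; abel
      rw [h1, h1]
    · push Not at hm
      rw [yy_other z i hm, one_mul, one_mul]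
      by_cases h1 : ∀ m, i - ee k ≠ -ee m
      · rw [yy_other z _ h1]; simp
      by_cases h2 : ∀ m, i - ee l ≠ -ee m
      · rw [yy_other z _ h2]; simp
      exfalso
      push Not at h1 h2
      obtain ⟨m, h1⟩ := h1
      obtain ⟨n, h2⟩ := h2
      have h3 : i = ee k - ee m := by rw [← sub_add_cancel i (ee k), h1]; abel
      have h4 : i = ee l - ee n := by rw [← sub_add_cancel i (ee l), h2]; abel
      have hmk : k ≠ m := by rintro rfl; exact hi (by rw [h3, sub_self])
      rw [h3] at h4
      have h5 := congrFun h4 k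
      simp only [ee, Pi.sub_apply, Pi.single_apply, if_true, hkl, hmk, if_false] at h5
      split_ifs at h5 <;> revert h5 <;> decide

end

section
variable {G : Type} [Group G] {κ : Type} [DecidableEq κ] [Fintype κ]

/-- tracking in the product -/
def Tr2 (S : Set G) (N : ℕ) (σ : Equiv.Perm (II κ × (Fin (N + 2) → G))) (n : ℕ) : Prop :=
  ∀ i, ∃ i', ∃ τ, Tr S N τ n ∧ ∀ x, σ (i, x) = (i', τ x)

lemma Tr2.mul {S : Set G} {N : ℕ} {σ τ : Equiv.Perm (II κ × (Fin (N + 2) → G))} {n n' : ℕ}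
    (h : Tr2 S N σ n) (h' : Tr2 S N τ n') : Tr2 S N (σ * τ) (n + n') := by
  intro i
  obtain ⟨i', τ', h1, h2⟩ := h' i
  obtain ⟨i'', τ'', h3, h4⟩ := h i'
  exact ⟨i'', τ'' * τ', h3.mul h1, fun x => by simp [h2, h4]⟩

lemma Tr2.one (S : Set G) (N : ℕ) : Tr2 (κ := κ) S N 1 0 := fun i => ⟨i, 1, Tr.one S N, fun _ => rfl⟩

lemma Tr2.ph (S : Set G) (N : ℕ) (j) (n : ℕ) : Tr2 (κ := κ) S N (ph κ _ j) n := fun i =>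
  ⟨_, 1, (Tr.one S N).mono (Nat.zero_le _), fun x => ph_apply j i x⟩

lemma Tr2.ps (S : Set G) (N : ℕ) (z : κ → Equiv.Perm (Fin (N + 2) → G)) (h1 : ∀ k, Tr S N (z k) 1)
    (h2 : ∀ k, Tr S N (z k)⁻¹ 1) (j) : Tr2 S N (ps z j) 2 := by
  have key : ∀ i, Tr S N (yy z i) 1 ∧ Tr S N (yy z i)⁻¹ 1 := by
    intro i
    by_cases hm : ∃ m, i = -ee m
    · obtain ⟨m, rfl⟩ := hm
      rw [yy_neg, inv_inv]; exact ⟨h2 m, h1 m⟩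
    · push Not at hm
      rw [yy_other z i hm, inv_one]
      exact ⟨(Tr.one S N).mono (by omega), (Tr.one S N).mono (by omega)⟩
  intro i
  exact ⟨_, _, (key _).1.mul (key _).2, fun x => ps_apply z j i x⟩

lemma Tr2.list {S : Set G} {N : ℕ} (l : List (Equiv.Perm (II κ × (Fin (N + 2) → G))))
    (h : ∀ σ ∈ l, Tr2 S N σ 2) : Tr2 S N l.prod (2 * l.length) := by
  induction l with
  | nil => exact Tr2.one S N
  | cons σ l ih =>
    have := (h σ List.mem_cons_self).mul (ih fun τ hτ => h τ (List.mem_cons_of_mem _ hτ))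
    rw [List.prod_cons, List.length_cons]
    rwa [show 2 * (l.length + 1) = 2 + 2 * l.length by ring]

/-- embedding of the finite group -/
def io (N : ℕ) (i0 : Fin (N + 2)) : G →* Equiv.Perm (II κ × (Fin (N + 2) → G)) :=
  dg.comp ((MonoidHom.mulSingle (fun _ : II κ => Equiv.Perm (Fin (N + 2) → G)) 0).comp (dd N i0))

lemma io_apply (N : ℕ) (i0 : Fin (N + 2)) (g : G) (x) :
    io (κ := κ) N i0 g (0, x) = (0, dd N i0 g x) := by
  simp [io, dg_apply]

lemma io_inj (N : ℕ) (i0 : Fin (N + 2)) : Function.Injective (io (G := G) (κ := κ) N i0) := by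
  intro g g' h
  have := congrArg (fun σ : Equiv.Perm (II κ × (Fin (N + 2) → G)) => (σ (0, 1)).2 i0) h
  simpa [io_apply, dd_apply] using this

lemma io_track (S : Set G) (N : ℕ) (i0 : Fin (N + 2)) (g : G) (n : ℕ) (h1 : n ≤ i0.1)
    (h2 : i0.1 + n ≤ N + 1) (h : Tr2 S N (io (κ := κ) N i0 g) n) :
    ∃ m : List G, m.length ≤ n ∧ (∀ x ∈ m, x ∈ S ∨ x⁻¹ ∈ S) ∧ m.prod = g := by
  obtain ⟨i', τ, h3, h4⟩ := h 0
  refine Tr.dd S N i0 g n h1 h2 ?_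
  have : τ = dd N i0 g := by
    ext1 x
    have := h4 x
    rw [io_apply] at this
    exact (Prod.ext_iff.1 this).2.symm
  rwa [← this]

end
end ISG
namespace ISG
set_option linter.unusedSectionVars false
set_option linter.unusedSimpArgs false
open scoped commutatorElement
section
variable {G W : Type} [Group G] [Group W]

lemma wordNorm_le (S : Set G) (m : List G) (hm : ∀ x ∈ m, x ∈ S ∨ x⁻¹ ∈ S) :
    wordNorm S m.prod ≤ m.length := Nat.sInf_le ⟨m, hm, rfl, rfl⟩

lemma exists_norm_list (S : Set G) (hS : Subgroup.closure S = ⊤) (g : G) :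
    ∃ m : List G, (∀ x ∈ m, x ∈ S ∨ x⁻¹ ∈ S) ∧ m.length = wordNorm S g ∧ m.prod = g := by
  have hg : g ∈ Subgroup.closure S := by rw [hS]; trivial
  rw [← Subgroup.mem_toSubmonoid, Subgroup.closure_toSubmonoid] at hg
  obtain ⟨m, h1, h2⟩ := Submonoid.exists_list_of_mem_closure hg
  exact Nat.sInf_mem (s := {n | ∃ l : List G, (∀ x ∈ l, x ∈ S ∨ x⁻¹ ∈ S) ∧ l.length = n ∧ l.prod = g})
    ⟨m.length, m, h1, rfl, h2⟩

lemma inv_list (T : Set W) (m : List W) (hm : ∀ x ∈ m, x ∈ T ∨ x⁻¹ ∈ T) :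
    ∃ m' : List W, (∀ x ∈ m', x ∈ T ∨ x⁻¹ ∈ T) ∧ m'.length = m.length ∧ m'.prod = m.prod⁻¹ := by
  refine ⟨(m.map fun x => x⁻¹).reverse, ?_, by simp, by rw [List.prod_inv_reverse]⟩
  intro x hx
  simp only [List.mem_reverse, List.mem_map] at hx
  obtain ⟨y, hy, rfl⟩ := hx
  rw [inv_inv]
  exact (hm y hy).symm

lemma map_list (S : Set G) (T : Set W) (f : G →* W) (L : ℕ)
    (h : ∀ x ∈ S, ∃ m : List W, (∀ x ∈ m, x ∈ T ∨ x⁻¹ ∈ T) ∧ m.length ≤ L ∧ m.prod = f x)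
    (l : List G) (hl : ∀ x ∈ l, x ∈ S ∨ x⁻¹ ∈ S) :
    ∃ m : List W, (∀ x ∈ m, x ∈ T ∨ x⁻¹ ∈ T) ∧ m.length ≤ L * l.length ∧ m.prod = f l.prod := by
  induction l with
  | nil => exact ⟨[], by simp, by simp, by simp⟩
  | cons x l ih =>
    obtain ⟨m, h1, h2, h3⟩ := ih fun y hy => hl y (List.mem_cons_of_mem _ hy)
    have : ∃ m : List W, (∀ x ∈ m, x ∈ T ∨ x⁻¹ ∈ T) ∧ m.length ≤ L ∧ m.prod = f x := by
      rcases hl x List.mem_cons_self with hx | hx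
      · exact h x hx
      · obtain ⟨m, k1, k2, k3⟩ := h _ hx
        obtain ⟨m', j1, j2, j3⟩ := inv_list T m k1
        exact ⟨m', j1, by omega, by rw [j3, k3]; simp⟩
    obtain ⟨m', k1, k2, k3⟩ := this
    refine ⟨m' ++ m, ?_, ?_, ?_⟩
    · intro y hy
      rcases List.mem_append.1 hy with hy | hy
      · exact k1 y hy
      · exact h1 y hy
    · rw [List.length_append, List.length_cons, mul_add]; omega
    · rw [List.prod_append, k3, h3, List.prod_cons, map_mul]

lemma wordNorm_map (S : Set G) (hS : Subgroup.closure S = ⊤) (T : Set W) (f : G →* W) (L : ℕ)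
    (h : ∀ x ∈ S, ∃ m : List W, (∀ x ∈ m, x ∈ T ∨ x⁻¹ ∈ T) ∧ m.length ≤ L ∧ m.prod = f x)
    (g : G) : wordNorm T (f g) ≤ L * wordNorm S g := by
  obtain ⟨l, h1, h2, h3⟩ := exists_norm_list S hS g
  obtain ⟨m, k1, k2, k3⟩ := map_list S T f L h l h1
  rw [h3] at k3
  rw [← k3, ← h2]
  exact (wordNorm_le T m k1).trans k2

end

section
variable {P Q H : Type} [Group P] [Group Q] [Group H]

lemma ev_tl (φ : ℕ → P →* H) (ψ : ℕ → Q →* H) (l : List (Option (B P Q))) :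
    (((l.map (tl φ ψ)).prod : WW φ ψ) : Equiv.Perm (List Bool × H)) = ev φ ψ l := by
  induction l with
  | nil => rfl
  | cons c l ih => rw [ev_cons, List.map_cons, List.prod_cons, Subgroup.coe_mul, ih]; rfl

end

/-- index of generators -/
abbrev KK (d : ℕ) := Option (Fin d)
/-- decorating group -/
abbrev PP (d : ℕ) := Multiplicative (II (KK d))

section
variable {d : ℕ} (M : MarkedGroup d)

/-- diameter -/
noncomputable def di : ℕ := Finset.univ.sup fun g : M.carrier => wordNorm (M.gens : Set M.carrier) g

lemma le_di (g : M.carrier) : wordNorm (M.gens : Set M.carrier) g ≤ di M :=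
  Finset.le_sup (f := fun g : M.carrier => wordNorm (M.gens : Set M.carrier) g) (Finset.mem_univ g)

/-- permuted space -/
abbrev Om := Fin (2 * di M + 2) → M.carrier

/-- middle index -/
noncomputable def mi : Fin (2 * di M + 2) := ⟨di M, by omega⟩

/-- enumeration of generators -/
noncomputable def ge (k : Fin d) : M.carrier := ((M.gens.equivFinOfCardEq M.card_gens).symm k).1

lemma ge_mem (k : Fin d) : ge M k ∈ M.gens := ((M.gens.equivFinOfCardEq M.card_gens).symm k).2

lemma exists_ge (x : M.carrier) (hx : x ∈ M.gens) : ∃ k, ge M k = x :=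
  ⟨M.gens.equivFinOfCardEq M.card_gens ⟨x, hx⟩, by simp [ge]⟩

/-- the permutations -/
noncomputable def zz : KK d → Equiv.Perm (Om M)
  | none => uu M.carrier (2 * di M)
  | some k => vv (2 * di M) (mi M) (ge M k)

lemma lift_ww (k : Fin d) :
    Monoid.Coprod.lift (ph (KK d) (Om M)) (ps (zz M)) (ww none (some k)) =
      io (κ := KK d) (2 * di M) (mi M) (ge M k) := by
  rw [ww_lift _ _ _ (by simp)]
  have : ⁅zz M none, zz M (some k)⁆ = dd (2 * di M) (mi M) (ge M k) :=
    comm_uv _ _ (by rw [Fin.lt_def]; simp [mi]; omega) _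
  rw [this]; rfl

lemma zz_tr (k : KK d) : Tr (M.gens : Set M.carrier) (2 * di M) (zz M k) 1 ∧
    Tr (M.gens : Set M.carrier) (2 * di M) (zz M k)⁻¹ 1 := by
  rcases k with _ | k
  · exact ⟨Tr.uu _ _, Tr.uu_inv _ _⟩
  · exact ⟨Tr.vv _ _ _ _ (ge_mem M k), Tr.vv_inv _ _ _ _ (ge_mem M k)⟩

lemma lower (g : M.carrier) (l : List (Equiv.Perm (II (KK d) × Om M)))
    (hl : ∀ σ ∈ l, (∃ p, ph (KK d) (Om M) p = σ) ∨ ∃ q, ps (zz M) q = σ)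
    (hp : l.prod = io (κ := KK d) (2 * di M) (mi M) g) :
    wordNorm (M.gens : Set M.carrier) g ≤ 2 * l.length := by
  by_cases h : 2 * l.length ≤ di M
  · have h1 : Tr2 (M.gens : Set M.carrier) (2 * di M) l.prod (2 * l.length) := by
      refine Tr2.list l fun σ hσ => ?_
      rcases hl σ hσ with ⟨p, rfl⟩ | ⟨q, rfl⟩
      · exact Tr2.ph _ _ _ _
      · exact Tr2.ps _ _ _ (fun k => (zz_tr M k).1) (fun k => (zz_tr M k).2) q
    rw [hp] at h1
    obtain ⟨m, k1, k2, rfl⟩ := io_track _ _ _ _ _ (by simpa [mi] using h)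
      (by simp only [mi]; omega) h1
    exact (wordNorm_le _ m k2).trans k1
  · exact (le_di M g).trans (by omega)

end

section
variable {d : ℕ} (Gs : ℕ → MarkedGroup d)

/-- decoration target -/
abbrev HH := ∀ s : ℕ, Equiv.Perm (II (KK d) × Om (Gs s))

/-- first family -/
noncomputable def phi (s : ℕ) : PP d →* HH Gs :=
  (MonoidHom.mulSingle (fun s => Equiv.Perm (II (KK d) × Om (Gs s))) s).comp (ph (KK d) (Om (Gs s)))

/-- second family -/
noncomputable def psi (s : ℕ) : PP d →* HH Gs :=
  (MonoidHom.mulSingle (fun s => Equiv.Perm (II (KK d) × Om (Gs s))) s).comp (ps (zz (Gs s)))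

lemma finD : FinD (phi Gs) (psi Gs) := by
  intro s
  refine ⟨(MonoidHom.mulSingle (fun s => Equiv.Perm (II (KK d) × Om (Gs s))) s).range, ?_,
    fun p => ⟨_, rfl⟩, fun q => ⟨_, rfl⟩⟩
  exact Set.finite_range (MonoidHom.mulSingle (fun s => Equiv.Perm (II (KK d) × Om (Gs s))) s)

/-- the words -/
noncomputable def lw (d s : ℕ) (k : Fin d) : List (Option (B (PP d) (PP d))) :=
  (loc s (ww (none : KK d) (some k)) (ww_fst _ _) (ww_snd _ _)).choose

/-- the embedding into permutations -/
noncomputable def psi0 (s : ℕ) : (Gs s).carrier →* Equiv.Perm (List Bool × HH Gs) :=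
  (dl (v0 s)).comp ((MonoidHom.mulSingle (fun s => Equiv.Perm (II (KK d) × Om (Gs s))) s).comp
    (io (κ := KK d) (2 * di (Gs s)) (mi (Gs s))))

lemma psi0_inj (s : ℕ) : Function.Injective (psi0 Gs s) :=
  (dl_inj _).comp ((Pi.mulSingle_injective s).comp (io_inj _ _))

lemma ev_lw (s : ℕ) (k : Fin d) :
    ev (phi Gs) (psi Gs) (lw d s k) = psi0 Gs s (ge (Gs s) k) := by
  have := (loc s (ww (none : KK d) (some k)) (ww_fst _ _) (ww_snd _ _)).choose_spec
    (HH Gs) (phi Gs) (psi Gs)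
  refine this.trans ?_
  have h2 : Monoid.Coprod.lift (phi Gs s) (psi Gs s) =
      (MonoidHom.mulSingle (fun s => Equiv.Perm (II (KK d) × Om (Gs s))) s).comp
        (Monoid.Coprod.lift (ph (KK d) (Om (Gs s))) (ps (zz (Gs s)))) := by
    rw [Monoid.Coprod.comp_lift]; rfl
  rw [h2, MonoidHom.comp_apply, lift_ww]; rfl

lemma psi0_mem (s : ℕ) (g : (Gs s).carrier) : psi0 Gs s g ∈ WW (phi Gs) (psi Gs) := by
  have : Subgroup.closure ((Gs s).gens : Set (Gs s).carrier) ≤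
      (WW (phi Gs) (psi Gs)).comap (psi0 Gs s) := by
    rw [Subgroup.closure_le]
    intro x hx
    obtain ⟨k, rfl⟩ := exists_ge (Gs s) x hx
    show psi0 Gs s (ge (Gs s) k) ∈ WW (phi Gs) (psi Gs)
    rw [← ev_lw, ← ev_tl]
    exact SetLike.coe_mem _
  rw [(Gs s).isGen] at this
  exact this (Subgroup.mem_top g)

/-- the embedding -/
noncomputable def Psi (s : ℕ) : (Gs s).carrier →* WW (phi Gs) (psi Gs) :=
  (psi0 Gs s).codRestrict _ (psi0_mem Gs s)

lemma Psi_inj (s : ℕ) : Function.Injective (Psi Gs s) := fun x y h =>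
  psi0_inj Gs s (congrArg Subtype.val h)

lemma upper (s : ℕ) (g : (Gs s).carrier) :
    wordNorm (TT (phi Gs) (psi Gs) : Set (WW (phi Gs) (psi Gs))) (Psi Gs s g) ≤
      (1 + ∑ k, (lw d s k).length) * wordNorm ((Gs s).gens : Set (Gs s).carrier) g := by
  refine wordNorm_map _ (Gs s).isGen _ _ _ ?_ g
  intro x hx
  obtain ⟨k, rfl⟩ := exists_ge (Gs s) x hx
  refine ⟨(lw d s k).map (tl (phi Gs) (psi Gs)), ?_, ?_, ?_⟩
  · intro y hy
    obtain ⟨c, -, rfl⟩ := List.mem_map.1 hy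
    exact Or.inl ((mem_TT _ _ _).2 ⟨c, rfl⟩)
  · rw [List.length_map]
    have := Finset.single_le_sum (f := fun k => (lw d s k).length) (fun i _ => Nat.zero_le _)
      (Finset.mem_univ k)
    omega
  · apply Subtype.ext
    rw [ev_tl, ev_lw]; rfl

lemma lower' (s : ℕ) (g : (Gs s).carrier) :
    wordNorm ((Gs s).gens : Set (Gs s).carrier) g ≤
      2 * wordNorm (TT (phi Gs) (psi Gs) : Set (WW (phi Gs) (psi Gs))) (Psi Gs s g) := by
  obtain ⟨m, h1, h2, h3⟩ := exists_norm_list _ (TT_gen (phi Gs) (psi Gs)) (Psi Gs s g)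
  obtain ⟨l, h4, h5⟩ := TT_word _ _ m h1
  rw [h3] at h5
  have h6 : ev (phi Gs) (psi Gs) l = psi0 Gs s g := h5
  obtain ⟨n, k1, k2, k3, -⟩ := track (phi Gs) (psi Gs) s l (v0 s) (by simp [v0]) 1
  have k4 : n.prod = MonoidHom.mulSingle (fun s => Equiv.Perm (II (KK d) × Om (Gs s))) s
      (io (κ := KK d) (2 * di (Gs s)) (mi (Gs s)) g) := by
    rw [h6] at k3
    have : psi0 Gs s g (v0 s, 1) = (v0 s, _) := dl_self (v0 s) _ 1
    rw [this] at k3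
    simpa using k3.symm
  have k5 := lower (Gs s) g (n.map (Pi.evalMonoidHom (fun s => Equiv.Perm (II (KK d) × Om (Gs s))) s))
    ?_ ?_
  · rw [List.length_map] at k5; omega
  · intro σ hσ
    obtain ⟨x, hx, rfl⟩ := List.mem_map.1 hσ
    rcases k2 x hx with ⟨p, rfl⟩ | ⟨q, rfl⟩
    · exact Or.inl ⟨p, by simp [phi]⟩
    · exact Or.inr ⟨q, by simp [psi]⟩
  · rw [← map_list_prod, k4]; simp

end
end ISG


/-- Proposition (imbedding a sequence of `d`-generated finite groups in groups
of subexponential growth, with uniformly controlled distortion): there are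
assignments of constants `K, L` — depending only on `s`, on `S ∩ [0, s)` and on
the groups `G j` for `j ∈ S`, `j < s`, but not on `G j` for `j ≥ s` — such
that for every sequence `(G i)` of `d`-generated finite groups and every
`S ⊆ ℕ` there is a finitely generated group `W_S` of subexponential growth
admitting, for each `s ∈ S`, a `(K, L)`-bi-Lipschitz injective homomorphism
`Ψ_s : G_s → W_S` for the word metrics. -/
theorem imbed_sequence_in_subexp_group (d : ℕ) :
    ∃ K L : Set ℕ → (ℕ → MarkedGroup d) → ℕ → ℝ,
      -- the constants depend only on `s`, `S ∩ [0, s)` and the groups `G j`,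
      -- `j ∈ S`, `j < s`:
      (∀ (S S' : Set ℕ) (Gs Gs' : ℕ → MarkedGroup d) (s : ℕ),
        (∀ j < s, j ∈ S ↔ j ∈ S') → (∀ j < s, j ∈ S → Gs j = Gs' j) →
        K S Gs s = K S' Gs' s ∧ L S Gs s = L S' Gs' s) ∧
      ∀ (Gs : ℕ → MarkedGroup d) (S : Set ℕ),
        ∃ (W : Type) (_ : Group W) (T : Finset W),
          Subgroup.closure (T : Set W) = ⊤ ∧
          SubexpGrowth (T : Set W) ∧
          ∀ s ∈ S, 1 ≤ K S Gs s ∧ 1 ≤ L S Gs s ∧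
            ∃ Ψ : (Gs s).carrier →* W, Function.Injective Ψ ∧
              ∀ x y : (Gs s).carrier,
                (wordDist ((Gs s).gens : Set (Gs s).carrier) x y : ℝ) / K S Gs s ≤
                    (wordDist (T : Set W) (Ψ x) (Ψ y) : ℝ) ∧
                (wordDist (T : Set W) (Ψ x) (Ψ y) : ℝ) ≤
                    L S Gs s * (wordDist ((Gs s).gens : Set (Gs s).carrier) x y : ℝ) := by
  refine ⟨fun _ _ _ => 2, fun _ _ s => ((1 + ∑ k, (ISG.lw d s k).length : ℕ) : ℝ),
    fun _ _ _ _ _ _ _ => ⟨rfl, rfl⟩, fun Gs S => ?_⟩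
  refine ⟨ISG.WW (ISG.phi Gs) (ISG.psi Gs), inferInstance, ISG.TT (ISG.phi Gs) (ISG.psi Gs),
    ISG.TT_gen _ _, ISG.TT_subexp _ _ (ISG.finD Gs), fun s _ => ⟨by norm_num, ?_, ISG.Psi Gs s,
      ISG.Psi_inj Gs s, fun x y => ?_⟩⟩
  · have : 1 ≤ 1 + ∑ k, (ISG.lw d s k).length := by omega
    beta_reduce
    exact_mod_cast this
  · have h1 := ISG.lower' Gs s (x * y⁻¹)
    have h2 := ISG.upper Gs s (x * y⁻¹)
    rw [map_mul, map_inv] at h1 h2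
    simp only [wordDist]
    constructor
    · rw [div_le_iff₀ (by norm_num)]
      rw [mul_comm]
      exact_mod_cast h1
    · exact_mod_cast h2
end

section
/- Let H be a perfect group (H = [H,H]) generated by a finite set T of cardinality d. Then there exists a constant J ≥ 1 such that for every surjective group homomorphism π: H → H', setting T' = π(T): the group H' is perfect, it is generated by the d-element set T', and every g ∈ H' satisfies ‖g‖_{T'} ≤ ‖g‖_perfect ≤ J·‖g‖_{T'}, where ‖·‖_perfect is the perfect norm on H' = [H',H'] with respect to T'. In particular the identity map (H', d_perfect) → (H', d_{T'}) is (J⁻¹,1)-bi-Lipschitz, with J independent of the quotient. -/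
/-- The perfect norm of `h` with respect to the generating set `T`: the least
length of a balanced word (i.e. a word lying in the commutator subgroup of the
free group `F_T`) representing `h`. -/
noncomputable def perfectNorm {H : Type*} [Group H] (T : Set H) (h : H) : ℕ :=
  sInf {n | ∃ L : List (T × Bool),
    FreeGroup.mk L ∈ commutator (FreeGroup T) ∧
    L.length = n ∧
    FreeGroup.lift (fun t : T => (t : H)) (FreeGroup.mk L) = h}

lemma balanced_of_list {G : Type} [Group G] (S : Set G) (J : ℕ)
    (hS : ∀ t ∈ S, ∃ L : List (S × Bool), FreeGroup.mk L ∈ commutator (FreeGroup S) ∧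
      L.length ≤ J ∧ FreeGroup.lift (fun t : S => (t : G)) (FreeGroup.mk L) = t)
    (l : List G) (hl : ∀ x ∈ l, x ∈ S ∨ x⁻¹ ∈ S) :
    ∃ L : List (S × Bool), FreeGroup.mk L ∈ commutator (FreeGroup S) ∧
      L.length ≤ J * l.length ∧
      FreeGroup.lift (fun t : S => (t : G)) (FreeGroup.mk L) = l.prod := by
  induction l with
  | nil => exact ⟨[], by rw [← FreeGroup.one_eq_mk]; exact one_mem _, by simp, by
      rw [← FreeGroup.one_eq_mk]; simp⟩
  | cons a l ih =>
    obtain ⟨L, h1, h2, h3⟩ := ih (fun x hx => hl x (List.mem_cons_of_mem _ hx))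
    have key : ∃ M : List (S × Bool), FreeGroup.mk M ∈ commutator (FreeGroup S) ∧
        M.length ≤ J ∧ FreeGroup.lift (fun t : S => (t : G)) (FreeGroup.mk M) = a := by
      rcases hl a List.mem_cons_self with h | h
      · exact hS a h
      · obtain ⟨M, m1, m2, m3⟩ := hS _ h
        refine ⟨FreeGroup.invRev M, ?_, ?_, ?_⟩
        · rw [← FreeGroup.inv_mk]; exact inv_mem m1
        · rwa [FreeGroup.invRev_length]
        · rw [← FreeGroup.inv_mk, map_inv, m3, inv_inv]
    obtain ⟨M, m1, m2, m3⟩ := key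
    refine ⟨M ++ L, ?_, ?_, ?_⟩
    · rw [← FreeGroup.mul_mk]; exact mul_mem m1 h1
    · rw [List.length_append, List.length_cons, Nat.mul_add]; omega
    · rw [← FreeGroup.mul_mk, map_mul, m3, h3, List.prod_cons]

lemma list_of_word {G : Type} [Group G] (S : Set G) (L : List (S × Bool)) :
    ∃ l : List G, (∀ x ∈ l, x ∈ S ∨ x⁻¹ ∈ S) ∧ l.length = L.length ∧
      l.prod = FreeGroup.lift (fun t : S => (t : G)) (FreeGroup.mk L) := by
  refine ⟨L.map fun x => cond x.2 (x.1 : G) (x.1 : G)⁻¹, ?_, by simp, by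
    rw [FreeGroup.lift_mk]⟩
  intro x hx
  obtain ⟨⟨t, b⟩, -, rfl⟩ := List.mem_map.1 hx
  cases b <;> simp

lemma map_comm_le {A B : Type} [Group A] [Group B] (f : A →* B) :
    (commutator A).map f ≤ commutator B := by
  rw [commutator_def, commutator_def, Subgroup.map_commutator]
  exact Subgroup.commutator_mono le_top le_top

lemma map_comm_eq {A B : Type} [Group A] [Group B] (f : A →* B)
    (hf : Function.Surjective f) : (commutator A).map f = commutator B := by
  rw [commutator_def, commutator_def, Subgroup.map_commutator,
    Subgroup.map_top_of_surjective f hf]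

/-- If `H` is a perfect group generated by a finite set `T` of cardinality `d`,
then there is a constant `J ≥ 1` such that for every quotient `π : H ↠ H'`,
the group `H'` is perfect, is generated by `T' = π(T)`, and
`‖g‖_{T'} ≤ ‖g‖_perfect ≤ J ‖g‖_{T'}` for every `g ∈ H'`; i.e. the identity
`(H', d_perfect) → (H', d_{T'})` is `(J⁻¹, 1)`-bi-Lipschitz, with `J`
independent of the quotient. -/
theorem perfect_norm_comparable_in_quotients
    (H : Type) [Group H] (d : ℕ) (T : Finset H)
    (hcard : T.card = d)
    (hgen : Subgroup.closure (T : Set H) = ⊤)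
    (hperf : commutator H = ⊤) :
    ∃ J : ℕ, 1 ≤ J ∧
      ∀ (H' : Type) (_ : Group H') (π : H →* H'), Function.Surjective π →
        commutator H' = ⊤ ∧
        Subgroup.closure (π '' (T : Set H)) = ⊤ ∧
        ∀ g : H',
          wordNorm (π '' (T : Set H)) g ≤ perfectNorm (π '' (T : Set H)) g ∧
          perfectNorm (π '' (T : Set H)) g ≤ J * wordNorm (π '' (T : Set H)) g := by
  have hex : ∀ t : H, ∃ L : List (↥(T : Set H) × Bool),
      FreeGroup.mk L ∈ commutator (FreeGroup (T : Set H)) ∧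
      FreeGroup.lift (fun t : (T : Set H) => (t : H)) (FreeGroup.mk L) = t := by
    intro t
    have hs : Function.Surjective (FreeGroup.lift (fun t : (T : Set H) => (t : H))) := by
      rw [← MonoidHom.range_eq_top, FreeGroup.range_lift_eq_closure, Subtype.range_coe]
      exact hgen
    have ht : t ∈ (commutator (FreeGroup (T : Set H))).map
        (FreeGroup.lift (fun t : (T : Set H) => (t : H))) := by
      rw [map_comm_eq _ hs, hperf]; trivial
    obtain ⟨w, hw, rfl⟩ := ht
    obtain ⟨L, rfl⟩ := Quot.exists_rep w
    exact ⟨L, hw, rfl⟩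
  choose W hW1 hW2 using hex
  refine ⟨1 + T.sup fun t => (W t).length, by omega, ?_⟩
  intro H' _ π hπ
  have hc : Subgroup.closure (π '' (T : Set H)) = ⊤ := by
    rw [← MonoidHom.map_closure, hgen, Subgroup.map_top_of_surjective π hπ]
  refine ⟨by rw [← map_comm_eq π hπ, hperf, Subgroup.map_top_of_surjective π hπ], hc, ?_⟩
  intro g
  have hS : ∀ t ∈ π '' (T : Set H), ∃ L : List ((π '' (T : Set H)) × Bool),
      FreeGroup.mk L ∈ commutator (FreeGroup (π '' (T : Set H))) ∧
      L.length ≤ (1 + T.sup fun t => (W t).length) ∧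
      FreeGroup.lift (fun t : (π '' (T : Set H)) => (t : H')) (FreeGroup.mk L) = t := by
    rintro _ ⟨t, ht, rfl⟩
    let φ : ↥(T : Set H) → ↥(π '' (T : Set H)) := fun t => ⟨π t, t, t.2, rfl⟩
    refine ⟨(W t).map fun x => (φ x.1, x.2), ?_, ?_, ?_⟩
    · rw [← FreeGroup.map.mk]
      exact map_comm_le (FreeGroup.map φ) (Subgroup.mem_map_of_mem _ (hW1 t))
    · rw [List.length_map]
      have := Finset.le_sup (f := fun t => (W t).length) (Finset.mem_coe.1 ht)
      omega
    · rw [← FreeGroup.map.mk]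
      conv_rhs => rw [← hW2 t]
      have : (FreeGroup.lift (fun t : (π '' (T : Set H)) => (t : H'))).comp (FreeGroup.map φ)
          = π.comp (FreeGroup.lift (fun t : (T : Set H) => (t : H))) := by
        ext x; simp [φ]
      exact DFunLike.congr_fun this (FreeGroup.mk (W t))
  have hne : {n | ∃ l : List H', (∀ x ∈ l, x ∈ π '' (T : Set H) ∨ x⁻¹ ∈ π '' (T : Set H)) ∧
      l.length = n ∧ l.prod = g}.Nonempty := by
    have hg : g ∈ Subgroup.closure (π '' (T : Set H)) := by rw [hc]; trivial
    rw [← Subgroup.mem_toSubmonoid, Subgroup.closure_toSubmonoid] at hg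
    obtain ⟨l, h1, h2⟩ := Submonoid.exists_list_of_mem_closure hg
    exact ⟨_, l, h1, rfl, h2⟩
  obtain ⟨l, hl1, hl2, hl3⟩ := Nat.sInf_mem hne
  obtain ⟨L, hL1, hL2, hL3⟩ := balanced_of_list _ _ hS l hl1
  constructor
  · have hne' : {n | ∃ L : List ((π '' (T : Set H)) × Bool),
        FreeGroup.mk L ∈ commutator (FreeGroup (π '' (T : Set H))) ∧ L.length = n ∧
        FreeGroup.lift (fun t : (π '' (T : Set H)) => (t : H')) (FreeGroup.mk L)
          = g}.Nonempty := ⟨_, L, hL1, rfl, hL3.trans hl3⟩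
    obtain ⟨M, -, hM2, hM3⟩ := Nat.sInf_mem hne'
    obtain ⟨m, hm1, hm2, hm3⟩ := list_of_word _ M
    exact Nat.sInf_le ⟨m, hm1, hm2.trans hM2, hm3.trans hM3⟩
  · refine le_trans (b := L.length) (Nat.sInf_le ⟨L, hL1, rfl, hL3.trans hl3⟩) ?_
    rw [hl2] at hL2
    exact hL2
end

section
/- Let H be a finite group with a generating set T of cardinality d, let X be a normed vector space, let C > 0, and let Φ: H → X be a map that is 1-Lipschitz with respect to the word metric d_T and satisfies (1/#H)·Σ_{x∈H} ‖Φ(x)‖² ≤ C. Then there exist x, y ∈ H with d_T(x,y) > log(#H/2)/log(2d+1) − 1 and ‖Φ(x) − Φ(y)‖ ≤ 2√(2C). -/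
open scoped Pointwise in
theorem mem_ball_pow {H : Type} [Group H] [DecidableEq H] (T : Finset H)
    (hgen : Subgroup.closure (T : Set H) = ⊤) (g : H) (n : ℕ)
    (h : wordNorm (T : Set H) g ≤ n) : g ∈ (insert 1 (T ∪ T⁻¹)) ^ n := by
  have hne : {n | ∃ l : List H, (∀ x ∈ l, x ∈ (T : Set H) ∨ x⁻¹ ∈ (T : Set H)) ∧
      l.length = n ∧ l.prod = g}.Nonempty := by
    have hg : g ∈ Subgroup.closure (T : Set H) := by rw [hgen]; trivial
    rw [← Subgroup.mem_toSubmonoid, Subgroup.closure_toSubmonoid] at hg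
    obtain ⟨l, hl, hp⟩ := Submonoid.exists_list_of_mem_closure hg
    exact ⟨l.length, l, fun x hx => by simpa using hl x hx, rfl, hp⟩
  obtain ⟨l, hl, hlen, hp⟩ := Nat.sInf_mem hne
  have key : ∀ l : List H, (∀ x ∈ l, x ∈ (T : Set H) ∨ x⁻¹ ∈ (T : Set H)) →
      l.prod ∈ (insert 1 (T ∪ T⁻¹)) ^ l.length := by
    intro l
    induction l with
    | nil => intro _; simp
    | cons a l ih =>
      intro hl
      rw [List.prod_cons, List.length_cons, pow_succ']
      refine Finset.mul_mem_mul ?_ (ih fun x hx => hl x (List.mem_cons_of_mem _ hx))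
      have := hl a (by simp)
      simp only [Finset.mem_coe] at this
      simp [Finset.mem_inv', this]
  have := key l hl
  rw [hp] at this
  refine Finset.pow_subset_pow_right (Finset.mem_insert_self _ _) ?_ this
  rw [hlen]
  exact h

open scoped Pointwise in
theorem card_ball_le {H : Type} [Group H] [DecidableEq H] (T : Finset H) (n : ℕ) :
    ((insert 1 (T ∪ T⁻¹)) ^ n : Finset H).card ≤ (2 * T.card + 1) ^ n := by
  refine Finset.card_pow_le.trans (Nat.pow_le_pow_left ?_ n)
  have h1 := Finset.card_insert_le (1 : H) (T ∪ T⁻¹)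
  have h2 := Finset.card_union_le T T⁻¹
  rw [Finset.card_inv] at h2
  omega

/-- If `H` is a finite group with generating set `T` of cardinality `d`, `X` a
normed space, and `Φ : H → X` a `1`-Lipschitz map (for the word metric `d_T`)
with mean square norm at most `C`, then there are two points `x, y ∈ H` with
`d_T(x, y) > log(#H / 2) / log(2d + 1) - 1` and `‖Φ x - Φ y‖ ≤ 2 √(2C)`. -/
theorem far_points_with_close_images
    (H : Type) [Group H] [Fintype H] (d : ℕ) (T : Finset H)
    (hcard : T.card = d)
    (hgen : Subgroup.closure (T : Set H) = ⊤)
    (X : Type*) [NormedAddCommGroup X]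
    (C : ℝ) (hC : 0 < C) (Φ : H → X)
    (hlip : ∀ x y : H, ‖Φ x - Φ y‖ ≤ (wordDist (T : Set H) x y : ℝ))
    (hmean : (1 / (Fintype.card H : ℝ)) * ∑ x : H, ‖Φ x‖ ^ 2 ≤ C) :
    ∃ x y : H,
      Real.log ((Fintype.card H : ℝ) / 2) / Real.log (2 * d + 1) - 1 <
        (wordDist (T : Set H) x y : ℝ) ∧
      ‖Φ x - Φ y‖ ≤ 2 * Real.sqrt (2 * C) := by
  classical
  set N : ℝ := (Fintype.card H : ℝ) with hN
  have hNpos : 0 < N := by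
    rw [hN]; exact_mod_cast Fintype.card_pos
  set A : Finset H := Finset.univ.filter (fun x => ‖Φ x‖ ^ 2 ≤ 2 * C) with hA
  have hA2 : N / 2 ≤ (A.card : ℝ) := by
    have hsum : ∑ x : H, ‖Φ x‖ ^ 2 ≤ C * N := by
      rw [one_div, inv_mul_le_iff₀ hNpos] at hmean
      linarith
    have h1 : (Aᶜ.card : ℝ) * (2 * C) ≤ ∑ x : H, ‖Φ x‖ ^ 2 := by
      calc (Aᶜ.card : ℝ) * (2 * C) = ∑ x ∈ Aᶜ, 2 * C := by simp
        _ ≤ ∑ x ∈ Aᶜ, ‖Φ x‖ ^ 2 := by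
          refine Finset.sum_le_sum fun x hx => ?_
          simp [hA] at hx
          exact hx.le
        _ ≤ ∑ x : H, ‖Φ x‖ ^ 2 :=
          Finset.sum_le_sum_of_subset_of_nonneg (Finset.subset_univ _)
            fun _ _ _ => by positivity
    have h2 : (A.card : ℝ) + Aᶜ.card = N := by
      rw [hN]; exact_mod_cast Finset.card_add_card_compl A
    have h3 : (Aᶜ.card : ℝ) * 2 ≤ N := by
      refine le_of_mul_le_mul_right ?_ hC
      linarith
    linarith
  have hAne : A.Nonempty := by
    rw [← Finset.card_pos]
    have : (0 : ℝ) < A.card := by linarith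
    exact_mod_cast this
  obtain ⟨x0, hx0⟩ := hAne
  have hnorm : ∀ x ∈ A, ‖Φ x‖ ≤ Real.sqrt (2 * C) := by
    intro x hx
    simp only [hA, Finset.mem_filter, Finset.mem_univ, true_and] at hx
    exact Real.le_sqrt_of_sq_le hx
  by_contra hcon
  push Not at hcon
  have hd : ∀ y ∈ A, (wordDist (T : Set H) y x0 : ℝ) ≤
      Real.log (N / 2) / Real.log (2 * d + 1) - 1 := by
    intro y hy
    by_contra hlt
    have h1 := hcon y x0 (not_le.mp hlt)
    have h2 := norm_sub_le (Φ y) (Φ x0)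
    have h3 := hnorm y hy
    have h4 := hnorm x0 hx0
    linarith
  have hL0 : 0 ≤ Real.log (N / 2) / Real.log (2 * d + 1) - 1 :=
    le_trans (Nat.cast_nonneg _) (hd x0 hx0)
  set L := Real.log (N / 2) / Real.log (2 * d + 1) - 1 with hL
  have hdpos : 0 < d := by
    rcases Nat.eq_zero_or_pos d with h | h
    · rw [hL, h] at hL0
      norm_num at hL0
    · exact h
  have hd1 : (1 : ℝ) ≤ d := by exact_mod_cast hdpos
  have hlog : 0 < Real.log (2 * d + 1) := Real.log_pos (by linarith)
  have hcardA : A.card ≤ (2 * d + 1) ^ ⌊L⌋₊ := by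
    rw [← hcard]
    refine le_trans ?_ (card_ball_le T ⌊L⌋₊)
    refine Finset.card_le_card_of_injOn (fun y => y * x0⁻¹) ?_ ?_
    · intro y hy
      exact mem_ball_pow T hgen _ _ (Nat.le_floor (hd y hy))
    · intro a _ b _ hab
      exact mul_right_cancel hab
  have h5 : N / 2 ≤ (2 * (d : ℝ) + 1) ^ ⌊L⌋₊ := hA2.trans (by exact_mod_cast hcardA)
  have h6 := Real.log_le_log (by linarith) h5
  rw [Real.log_pow] at h6
  have h7 := Nat.floor_le hL0
  have h8 : Real.log (N / 2) = (L + 1) * Real.log (2 * d + 1) := by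
    rw [hL]; field_simp; ring
  nlinarith
end
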